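/- Let N ≥ 2, let B ⊂ ℝ^N be a bounded radial domain and I = closure{|x| : x ∈ B}. Suppose f : [0,∞) × I × ℝ → ℝ is continuous in (t,r), locally Lipschitz in u uniformly in (t,r), and periodic in t: there is T > 0 with f(t+T,r,u) = f(t,r,u) for all t,r,u. Let u ∈ C^{2,1}(B × (0,∞)) ∩ C(B̄ × [0,∞)) be a T-periodic classical solution of u_t = Δu + f(t,|x|,u) in B × (0,∞) with u = 0 on ∂B × (0,∞) (i.e., u(x,t+T) = u(x,t) for all x ∈ B, t ∈ [0,∞)) such that the initial profile u₀ = u(·,0) satisfies: there is e ∈ S with u₀(x) ≥ u₀(σ_e(x)) for all x ∈ B(e) and u₀ ∘ σ_e ≢ u₀ on B(e). Then there exists p ∈ S such that u(·,t) is foliated Schwarz symmetric with respect to p for every t ∈ [0,∞). -/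

import Mathlib

/-!
The proof is a rotating plane argument. Fix a direction `v`. The difference between `u` and its
reflection in the hyperplane orthogonal to `v` solves a linear parabolic inequality on the half
domain on the side of `v` and vanishes on its boundary. If it is nonnegative, then it is either
positive at all times or identically zero, by the strong maximum principle and periodicity in time.
Thus a direction of weak domination is either one of strict domination or one of symmetry.
Weak domination is a closed condition on `v`, and strict domination is an open one, by the maximum
principle in narrow domains. Hence strict domination propagates from `e` along every segment that
avoids the directions of symmetry.

A plane spanned by two directions of symmetry contains no direction of strict domination, because
the product of two reflections is a rotation. It follows that the directions of symmetry form a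
linear hyperplane not containing `e`. Its unit normal `p` on the side of `e` is the axis: every `v`
with `⟪v, p⟫ ≥ 0` is a direction of weak domination, and `v = x - y` is the case needed to compare
the values of `u` at two points `x`, `y` of equal norm.
-/

open Set Metric Filter
open scoped RealInnerProductSpace

noncomputable section

variable {N : ℕ}

/-- Reflection through the hyperplane `H(e) = {x : ⟪x,e⟫ = 0}`:
`σ_e(x) = x - 2 (x·e) e`. -/
def reflHyp (e x : EuclideanSpace ℝ (Fin N)) : EuclideanSpace ℝ (Fin N) :=
  x - (2 * ⟪x, e⟫) • e

/-- The half domain `B(e) = {x ∈ B : x·e > 0}`. -/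
def halfDom (B : Set (EuclideanSpace ℝ (Fin N))) (e : EuclideanSpace ℝ (Fin N)) :
    Set (EuclideanSpace ℝ (Fin N)) := {x ∈ B | 0 < ⟪x, e⟫}

/-- A (bounded) radial domain: an open ball or an open annulus centered at the origin. -/
def IsRadialDomain (B : Set (EuclideanSpace ℝ (Fin N))) : Prop :=
  (∃ R, 0 < R ∧ B = Metric.ball 0 R) ∨
  (∃ r R, 0 < r ∧ r < R ∧ B = {x : EuclideanSpace ℝ (Fin N) | r < ‖x‖ ∧ ‖x‖ < R})

/-- `u` is foliated Schwarz symmetric on `D` with respect to the unit vector `p`: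
`u(x) ≥ u(y)` whenever `|x| = |y|` and `x·p ≥ y·p`.  (This is equivalent to axial
symmetry with respect to `ℝp` together with monotonicity in the polar angle.) -/
def FoliatedSchwarzOn (D : Set (EuclideanSpace ℝ (Fin N)))
    (u : EuclideanSpace ℝ (Fin N) → ℝ) (p : EuclideanSpace ℝ (Fin N)) : Prop :=
  ∀ x ∈ D, ∀ y ∈ D, ‖x‖ = ‖y‖ → ⟪y, p⟫ ≤ ⟪x, p⟫ → u y ≤ u x

/-- The omega limit set of a (bounded) solution `u = u(x,t)`: all continuous
functions `z` on `B̄` which are uniform limits on `B̄` of `u(·, tₙ)` for some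
sequence `tₙ → ∞`. -/
def omegaLimitSet (B : Set (EuclideanSpace ℝ (Fin N)))
    (u : EuclideanSpace ℝ (Fin N) → ℝ → ℝ) : Set (EuclideanSpace ℝ (Fin N) → ℝ) :=
  {z | ContinuousOn z (closure B) ∧ ∃ t : ℕ → ℝ, Tendsto t atTop atTop ∧
    ∀ ε > 0, ∃ n₀ : ℕ, ∀ n ≥ n₀, ∀ x ∈ closure B, |u x (t n) - z x| ≤ ε}

open Module Topology
open scoped Gradient Laplacian

section SecondDerivativeTest

variable {E : Type*} [NormedAddCommGroup E] [InnerProductSpace ℝ E] {f : E → ℝ} {x : E}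

theorem differentiableAt_fderiv_of_contDiffAt_two (hf : ContDiffAt ℝ 2 f x) :
    DifferentiableAt ℝ (fderiv ℝ f) x :=
  (hf.fderiv_right (m := 1) (by norm_num)).differentiableAt one_ne_zero

theorem eventually_differentiableAt_of_contDiffAt_two (hf : ContDiffAt ℝ 2 f x) :
    ∀ᶠ y in 𝓝 x, DifferentiableAt ℝ f y :=
  (hf.eventually (by simp)).mono fun _ hy => hy.differentiableAt two_ne_zero

theorem deriv_deriv_comp_add_smul (hf : ContDiffAt ℝ 2 f x) (v : E) :
    deriv (deriv fun s : ℝ => f (x + s • v)) 0 = fderiv ℝ (fderiv ℝ f) x v v := by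
  have hline : ∀ s : ℝ, HasDerivAt (fun s : ℝ => x + s • v) v s := fun s => by
    simpa using ((hasDerivAt_id s).smul_const v).const_add x
  have hlim : Tendsto (fun s : ℝ => x + s • v) (𝓝 0) (𝓝 x) := by
    simpa using (hline 0).continuousAt.tendsto
  have hfirst : deriv (fun s : ℝ => f (x + s • v)) =ᶠ[𝓝 0] fun s => fderiv ℝ f (x + s • v) v := by
    filter_upwards [hlim.eventually (eventually_differentiableAt_of_contDiffAt_two hf)] with s hs
    exact (hs.hasFDerivAt.comp_hasDerivAt s (hline s)).deriv
  have hsecond : HasFDerivAt (fun y => fderiv ℝ f y v)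
      ((ContinuousLinearMap.apply ℝ ℝ v).comp (fderiv ℝ (fderiv ℝ f) x)) (x + (0 : ℝ) • v) := by
    rw [zero_smul, add_zero]
    exact (ContinuousLinearMap.apply ℝ ℝ v).hasFDerivAt.comp x
      (differentiableAt_fderiv_of_contDiffAt_two hf).hasFDerivAt
  rw [hfirst.deriv_eq]
  exact (hsecond.comp_hasDerivAt (0 : ℝ) (hline 0)).deriv

theorem deriv_deriv_nonneg_of_isLocalMin {φ : ℝ → ℝ} {a : ℝ} (hφ : ContinuousAt φ a)
    (hmin : IsLocalMin φ a) : 0 ≤ deriv (deriv φ) a := by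
  by_contra! hneg
  have hmax : IsLocalMax φ a := isLocalMax_of_deriv_deriv_neg hneg hmin.deriv_eq_zero hφ
  have hconst : φ =ᶠ[𝓝 a] fun _ => φ a := by
    filter_upwards [hmin, hmax] with s h₁ h₂ using le_antisymm h₂ h₁
  simp [hconst.deriv.deriv_eq] at hneg

theorem fderiv_fderiv_nonneg_of_isLocalMin (hf : ContDiffAt ℝ 2 f x) (hmin : IsLocalMin f x)
    (v : E) : 0 ≤ fderiv ℝ (fderiv ℝ f) x v v := by
  have hline : Continuous fun s : ℝ => x + s • v := by fun_prop
  have hlim : Tendsto (fun s : ℝ => x + s • v) (𝓝 0) (𝓝 x) := by simpa using hline.tendsto 0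
  rw [← deriv_deriv_comp_add_smul hf]
  refine deriv_deriv_nonneg_of_isLocalMin ?_ ?_
  · exact ContinuousAt.comp (by simpa using hf.continuousAt) hline.continuousAt
  · filter_upwards [hlim.eventually hmin] with s hs using by simpa using hs

theorem deriv_le_of_touch_left {φ ψ : ℝ → ℝ} {a b t : ℝ} (hφ : HasDerivAt φ a t)
    (hψ : HasDerivAt ψ b t) (hle : ∀ᶠ s in 𝓝[<] t, ψ s ≤ φ s) (heq : ψ t = φ t) : a ≤ b := by
  have hslope : Tendsto (slope (φ - ψ) t) (𝓝[<] t) (𝓝 (a - b)) :=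
    (hφ.sub hψ).tendsto_slope.mono_left (nhdsWithin_mono t fun s hs => ne_of_lt hs)
  rw [← sub_nonpos]
  refine le_of_tendsto hslope ?_
  filter_upwards [hle, self_mem_nhdsWithin] with s hs hst
  rw [slope_def_field]
  refine div_nonpos_of_nonneg_of_nonpos ?_ (sub_nonpos.mpr (le_of_lt hst))
  simp [heq, hs]

end SecondDerivativeTest

section Paraboloid

variable {E : Type*} [NormedAddCommGroup E] [InnerProductSpace ℝ E]

/-- Affine functions (`c = 0`) and paraboloids, of which all barriers below are made. -/
def paraboloid (a : ℝ) (k : E) (c : ℝ) (x : E) : ℝ := a + ⟪x, k⟫ + c * ‖x‖ ^ 2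

theorem contDiff_paraboloid (a : ℝ) (k : E) (c : ℝ) {n : WithTop ℕ∞} :
    ContDiff ℝ n (paraboloid a k c) := by
  unfold paraboloid
  exact (contDiff_const.add (contDiff_id.inner ℝ contDiff_const)).add
    (contDiff_const.mul (contDiff_norm_sq ℝ))

theorem fderiv_paraboloid (a : ℝ) (k : E) (c : ℝ) :
    fderiv ℝ (paraboloid a k c) = fun x => innerSL ℝ (k + (2 * c) • x) := by
  ext x y
  have h := (((hasFDerivAt_id x).inner ℝ (hasFDerivAt_const k x)).const_add a).add
    ((hasStrictFDerivAt_norm_sq x).hasFDerivAt.const_mul c)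
  refine (congrArg (· y) h.fderiv).trans ?_
  simp [real_inner_comm y k]
  ring

end Paraboloid

section Laplacian

variable {E : Type*} [NormedAddCommGroup E] [InnerProductSpace ℝ E] [FiniteDimensional ℝ E]
  {f g : E → ℝ} {x : E}

theorem laplacian_eq_sum_fderiv_fderiv {ι : Type*} [Fintype ι] (b : OrthonormalBasis ι ℝ E)
    (f : E → ℝ) (x : E) : Δ f x = ∑ i, fderiv ℝ (fderiv ℝ f) x (b i) (b i) := by
  simp [InnerProductSpace.laplacian_eq_iteratedFDeriv_orthonormalBasis f b,
    iteratedFDeriv_two_apply]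

theorem laplacian_comp_linearIsometryEquiv (e : E ≃ₗᵢ[ℝ] E) (f : E → ℝ) (x : E) :
    Δ (fun y => f (e y)) x = Δ f (e x) := by
  let b := stdOrthonormalBasis ℝ E
  have h (i) : iteratedFDeriv ℝ 2 (fun y => f (e y)) x ![b i, b i]
      = iteratedFDeriv ℝ 2 f (e x) ![(b.map e) i, (b.map e) i] := by
    have hcomp := e.toContinuousLinearEquiv.iteratedFDerivWithin_comp_right f uniqueDiffOn_univ
      (mem_univ (e x)) 2
    simp only [preimage_univ, iteratedFDerivWithin_univ] at hcomp
    refine (congrArg (· ![b i, b i]) hcomp).trans ?_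
    simp only [ContinuousMultilinearMap.compContinuousLinearMap_apply]
    congr 1
    ext j
    fin_cases j <;> simp
  rw [InnerProductSpace.laplacian_eq_iteratedFDeriv_orthonormalBasis _ b,
    InnerProductSpace.laplacian_eq_iteratedFDeriv_orthonormalBasis f (b.map e)]
  exact Finset.sum_congr rfl fun i _ => h i

theorem laplacian_nonneg_of_isLocalMin (hf : ContDiffAt ℝ 2 f x) (hmin : IsLocalMin f x) :
    0 ≤ Δ f x := by
  rw [laplacian_eq_sum_fderiv_fderiv (stdOrthonormalBasis ℝ E)]
  exact Finset.sum_nonneg fun i _ => fderiv_fderiv_nonneg_of_isLocalMin hf hmin _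

theorem laplacian_le_of_touch (hf : ContDiffAt ℝ 2 f x) (hg : ContDiffAt ℝ 2 g x)
    (hle : ∀ᶠ y in 𝓝 x, g y ≤ f y) (heq : g x = f x) : Δ g x ≤ Δ f x := by
  have hmin : IsLocalMin (f - g) x := by
    filter_upwards [hle] with y hy
    simp only [Pi.sub_apply, heq]
    linarith
  have := laplacian_nonneg_of_isLocalMin (f := f - g) (hf.sub hg) hmin
  rwa [hf.laplacian_sub hg, sub_nonneg] at this

theorem laplacian_quadratic_comp (a₀ a₁ a₂ : ℝ) (hf : ContDiffAt ℝ 2 f x) :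
    Δ (fun y => a₀ + a₁ * f y + a₂ * f y ^ 2) x
      = (a₁ + 2 * a₂ * f x) * Δ f x + 2 * a₂ * ‖∇ f x‖ ^ 2 := by
  let b := stdOrthonormalBasis ℝ E
  have hfirst : fderiv ℝ (fun y => a₀ + a₁ * f y + a₂ * f y ^ 2)
      =ᶠ[𝓝 x] fun y => (a₁ + 2 * a₂ * f y) • fderiv ℝ f y := by
    filter_upwards [eventually_differentiableAt_of_contDiffAt_two hf] with y hy
    have hd := hy.hasFDerivAt
    refine (((hd.const_mul a₁).const_add a₀).add ((hd.pow 2).const_mul a₂)).fderiv.trans ?_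
    ext v
    simp
    ring
  have hsecond (i) : fderiv ℝ (fderiv ℝ fun y => a₀ + a₁ * f y + a₂ * f y ^ 2) x (b i) (b i)
      = (a₁ + 2 * a₂ * f x) * fderiv ℝ (fderiv ℝ f) x (b i) (b i)
        + 2 * a₂ * ‖⟪∇ f x, b i⟫‖ ^ 2 := by
    have hd := ((hf.differentiableAt two_ne_zero).hasFDerivAt.const_mul (2 * a₂)).const_add a₁
    rw [hfirst.fderiv_eq,
      fderiv_fun_smul hd.differentiableAt (differentiableAt_fderiv_of_contDiffAt_two hf), hd.fderiv]
    simp [inner_gradient_left]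
    ring
  simp only [laplacian_eq_sum_fderiv_fderiv b, hsecond, Finset.sum_add_distrib, ← Finset.mul_sum,
    b.sum_sq_norm_inner_left]

theorem gradient_paraboloid (a : ℝ) (k : E) (c : ℝ) (x : E) :
    ∇ (paraboloid a k c) x = k + (2 * c) • x := by
  refine ext_inner_right ℝ fun y => ?_
  rw [inner_gradient_left, fderiv_paraboloid, innerSL_apply_apply]

theorem laplacian_paraboloid (a : ℝ) (k : E) (c : ℝ) (x : E) :
    Δ (paraboloid a k c) x = 2 * c * finrank ℝ E := by
  have h (v : E) : fderiv ℝ (fderiv ℝ (paraboloid a k c)) x v v = 2 * c * ‖v‖ ^ 2 := by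
    rw [fderiv_paraboloid]
    have hd := (innerSL ℝ (E := E)).hasFDerivAt.comp x
      (((hasFDerivAt_id x).const_smul (2 * c)).const_add k)
    refine (congrArg (· v v) hd.fderiv).trans ?_
    simp [innerSL_apply_apply ℝ v v]
  simp [laplacian_eq_sum_fderiv_fderiv (stdOrthonormalBasis ℝ E), h, mul_comm]

end Laplacian

section Reflection

variable {E : Type*} [NormedAddCommGroup E] [InnerProductSpace ℝ E]

/-- The reflection through the hyperplane orthogonal to `v`, for `v` of any length; for `v = 0` it
is the identity. -/
def hyperplaneReflection (v : E) : E ≃ₗᵢ[ℝ] E := (ℝ ∙ v)ᗮ.reflection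

theorem hyperplaneReflection_zero : hyperplaneReflection (0 : E) = .refl ℝ E := by
  ext x
  exact Submodule.reflection_mem_subspace_eq_self (by simp)

theorem hyperplaneReflection_apply (v x : E) :
    hyperplaneReflection v x = x - (2 * ⟪x, v⟫ / ‖v‖ ^ 2) • v := by
  simp [hyperplaneReflection, Submodule.reflection_orthogonal_apply,
    Submodule.reflection_singleton_apply, real_inner_comm, two_mul, two_smul, add_div, add_smul]

theorem hyperplaneReflection_smul {c : ℝ} (hc : c ≠ 0) (v : E) :
    hyperplaneReflection (c • v) = hyperplaneReflection v := by
  simp only [hyperplaneReflection, Submodule.span_singleton_smul_eq hc.isUnit]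

theorem hyperplaneReflection_involutive (v : E) : Function.Involutive (hyperplaneReflection v) :=
  (ℝ ∙ v)ᗮ.reflection_involutive

theorem hyperplaneReflection_self (v : E) : hyperplaneReflection v v = -v :=
  Submodule.reflection_orthogonalComplement_singleton_eq_neg v

theorem inner_hyperplaneReflection (v x : E) : ⟪hyperplaneReflection v x, v⟫ = -⟪x, v⟫ := by
  have := (hyperplaneReflection v).inner_map_map (hyperplaneReflection v x) v
  rw [hyperplaneReflection_involutive, hyperplaneReflection_self, inner_neg_right] at this
  exact this.symm

theorem hyperplaneReflection_eq_self_of_inner_eq_zero {v x : E} (h : ⟪x, v⟫ = 0) :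
    hyperplaneReflection v x = x := by
  simp [hyperplaneReflection_apply, h]

theorem hyperplaneReflection_sub_of_norm_eq {x y : E} (h : ‖x‖ = ‖y‖) :
    hyperplaneReflection (x - y) x = y :=
  Submodule.reflection_sub h

theorem continuousAt_hyperplaneReflection_uncurry {v : E} (hv : v ≠ 0) (x : E) :
    ContinuousAt (fun p : E × E => hyperplaneReflection p.1 p.2) (v, x) := by
  have : ‖v‖ ^ 2 ≠ 0 := pow_ne_zero _ (norm_ne_zero_iff.mpr hv)
  simp only [hyperplaneReflection_apply]
  fun_prop (disch := assumption)

end Reflection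

section Supersolution

variable {E : Type*} [NormedAddCommGroup E] [InnerProductSpace ℝ E] [FiniteDimensional ℝ E]
  {Ω K : Set E} {L s t t₁ : ℝ} {w ψ : E → ℝ → ℝ} {x : E}

/-- The linear differential inequality `∂ₜw - Δw ≥ -L|w|` at the point `(x, t)`. It is satisfied by
the difference of two solutions of the semilinear equation, with `L` a Lipschitz constant of the
nonlinearity. -/
structure IsSupersolutionAt (L : ℝ) (w : E → ℝ → ℝ) (x : E) (t : ℝ) : Prop where
  differentiableAt : DifferentiableAt ℝ (w x) t
  contDiffAt : ContDiffAt ℝ 2 (fun y => w y t) x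
  le : -(L * |w x t|) ≤ deriv (w x) t - Δ (fun y => w y t) x

/-- The strict linear differential inequality `∂ₜψ - Δψ < -Lψ` at the point `(x, t)`, satisfied by
the barriers from below. -/
structure IsStrictSubsolutionAt (L : ℝ) (ψ : E → ℝ → ℝ) (x : E) (t : ℝ) : Prop where
  differentiableAt : DifferentiableAt ℝ (ψ x) t
  contDiffAt : ContDiffAt ℝ 2 (fun y => ψ y t) x
  lt : deriv (ψ x) t - Δ (fun y => ψ y t) x < -(L * ψ x t)

/-- A continuous function on `closure Ω × [0, ∞)` with `∂ₜw - Δw ≥ -L|w|` in `Ω × (0, ∞)`. -/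
structure IsSupersolution (Ω : Set E) (L : ℝ) (w : E → ℝ → ℝ) : Prop where
  continuousOn : ContinuousOn (fun p : E × ℝ => w p.1 p.2) (closure Ω ×ˢ Ici 0)
  isSupersolutionAt : ∀ x ∈ Ω, ∀ t, 0 < t → IsSupersolutionAt L w x t

theorem IsSupersolutionAt.le_of_touch (hw : IsSupersolutionAt L w x t) {η : ℝ → ℝ} {φ : E → ℝ}
    {b : ℝ} (hη : HasDerivAt η b t) (hη_le : ∀ᶠ s in 𝓝[<] t, η s ≤ w x s) (hη_eq : η t = w x t)
    (hφ : ContDiffAt ℝ 2 φ x) (hφ_le : ∀ᶠ y in 𝓝 x, φ y ≤ w y t) (hφ_eq : φ x = w x t) :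
    -(L * |w x t|) ≤ b - Δ φ x := by
  have htime := deriv_le_of_touch_left hw.differentiableAt.hasDerivAt hη hη_le hη_eq
  have hspace := laplacian_le_of_touch hw.contDiffAt hφ hφ_le hφ_eq
  linarith [hw.le]

theorem exists_eq_mul_and_forall_mul_le {X : Type*} [TopologicalSpace X] {K : Set X}
    (hK : IsCompact K) {f P : X → ℝ} (hf : ContinuousOn f K) (hP : ContinuousOn P K)
    (hP_pos : ∀ x ∈ K, 0 < P x) (hneg : ∃ x ∈ K, f x < 0) :
    ∃ x ∈ K, ∃ m < 0, f x = m * P x ∧ ∀ y ∈ K, m * P y ≤ f y := by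
  obtain ⟨x₀, hx₀, hfx₀⟩ := hneg
  obtain ⟨x, hx, hmin⟩ := hK.exists_isMinOn ⟨x₀, hx₀⟩ (hf.div hP fun x hx => (hP_pos x hx).ne')
  refine ⟨x, hx, f x / P x, (hmin hx₀).trans_lt (div_neg_of_neg_of_pos hfx₀ (hP_pos x₀ hx₀)),
    (div_mul_cancel₀ _ (hP_pos x hx).ne').symm, fun y hy => ?_⟩
  exact (le_div_iff₀ (hP_pos y hy)).mp (hmin hy)

theorem IsSupersolution.nonneg_of_nonneg_frontier (hw : IsSupersolution Ω L w) (hΩ : IsOpen Ω)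
    (hΩ_bdd : Bornology.IsBounded Ω) (hfrontier : ∀ x ∈ frontier Ω, ∀ t, 0 ≤ t → 0 ≤ w x t)
    (hinit : ∀ x ∈ Ω, 0 ≤ w x 0) (hx : x ∈ closure Ω) (ht : 0 ≤ t) : 0 ≤ w x t := by
  by_contra! hneg
  obtain ⟨⟨x₀, t₀⟩, ⟨hx₀, ht₀⟩, m, hm, heq, hle⟩ := exists_eq_mul_and_forall_mul_le
    (hΩ_bdd.isCompact_closure.prod (isCompact_Icc (a := 0) (b := t)))
    (hw.continuousOn.mono (prod_mono_right Icc_subset_Ici_self))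
    (P := fun p => Real.exp ((L + 1) * p.2)) (by fun_prop) (fun _ _ => Real.exp_pos _)
    ⟨(x, t), ⟨hx, ht, le_rfl⟩, hneg⟩
  simp only [mem_Icc] at hx₀ ht₀ heq
  have hle' : ∀ y ∈ closure Ω, ∀ s ∈ Icc 0 t, m * Real.exp ((L + 1) * s) ≤ w y s :=
    fun y hy s hs => hle (y, s) ⟨hy, hs⟩
  have hw_neg : w x₀ t₀ < 0 := heq ▸ mul_neg_of_neg_of_pos hm (Real.exp_pos _)
  have hx₀Ω : x₀ ∈ Ω := by
    rw [closure_eq_self_union_frontier] at hx₀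
    exact hx₀.resolve_right fun h => (hfrontier x₀ h t₀ ht₀.1).not_gt hw_neg
  have ht₀_pos : 0 < t₀ :=
    ht₀.1.lt_of_ne fun h => (hinit x₀ hx₀Ω).not_gt (by rwa [← h] at hw_neg)
  have hderiv : HasDerivAt (fun s => m * Real.exp ((L + 1) * s)) ((L + 1) * w x₀ t₀) t₀ := by
    refine (((hasDerivAt_id t₀).const_mul (L + 1)).exp.const_mul m).congr_deriv ?_
    simp only [id_eq, heq]
    ring
  have htouch := (hw.isSupersolutionAt x₀ hx₀Ω t₀ ht₀_pos).le_of_touch hderiv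
    (by filter_upwards [Ioo_mem_nhdsLT ht₀_pos] with s hs
        using hle' x₀ hx₀ s ⟨hs.1.le, hs.2.le.trans ht₀.2⟩)
    heq.symm (contDiffAt_const (c := w x₀ t₀))
    (by filter_upwards [hΩ.mem_nhds hx₀Ω] with y hy
        using heq ▸ hle' y (subset_closure hy) t₀ ht₀)
    rfl
  rw [InnerProductSpace.laplacian_const, abs_of_neg hw_neg] at htouch
  simp only [Pi.zero_apply] at htouch
  linarith

theorem IsSupersolution.ge_of_isStrictSubsolutionAt (hw : IsSupersolution Ω L w) (hL : 0 ≤ L)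
    (hnonneg : ∀ x ∈ Ω, ∀ t, 0 ≤ t → 0 ≤ w x t) (hK : IsCompact K) (hKΩ : K ⊆ Ω) (hs : 0 ≤ s)
    (hψ_cont : ContinuousOn (fun p : E × ℝ => ψ p.1 p.2) (K ×ˢ Icc s t₁))
    (hinit : ∀ x ∈ K, ψ x s ≤ w x s)
    (hψ : ∀ x ∈ K, ∀ t ∈ Ioc s t₁, 0 < ψ x t → K ∈ 𝓝 x ∧ IsStrictSubsolutionAt L ψ x t)
    (hx : x ∈ K) (ht : t ∈ Icc s t₁) : ψ x t ≤ w x t := by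
  have hcont : ContinuousOn (fun p : E × ℝ => w p.1 p.2 - ψ p.1 p.2) (K ×ˢ Icc s t₁) :=
    (hw.continuousOn.mono (prod_mono (hKΩ.trans subset_closure)
      fun t ht => hs.trans ht.1)).sub hψ_cont
  obtain ⟨⟨x₀, t₀⟩, ⟨hx₀, ht₀⟩, hmin⟩ :=
    (hK.prod isCompact_Icc).exists_isMinOn ⟨(x, t), hx, ht⟩ hcont
  simp only at hx₀ ht₀
  have hmin' : ∀ y ∈ K, ∀ s' ∈ Icc s t₁, w x₀ t₀ - ψ x₀ t₀ ≤ w y s' - ψ y s' :=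
    fun y hy s' hs' => hmin (show (y, s') ∈ K ×ˢ Icc s t₁ from ⟨hy, hs'⟩)
  by_contra! hlt
  have hm : w x₀ t₀ - ψ x₀ t₀ < 0 := (hmin' x hx t ht).trans_lt (sub_neg.mpr hlt)
  have hw₀ : 0 ≤ w x₀ t₀ := hnonneg x₀ (hKΩ hx₀) t₀ (hs.trans ht₀.1)
  have hst₀ : s < t₀ := ht₀.1.lt_of_ne fun h => by
    rw [← h] at hm
    linarith [hinit x₀ hx₀]
  obtain ⟨hnhds, hstrict⟩ := hψ x₀ hx₀ t₀ ⟨hst₀, ht₀.2⟩ (by linarith)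
  have htouch := (hw.isSupersolutionAt x₀ (hKΩ hx₀) t₀ (hs.trans_lt hst₀)).le_of_touch
    (hstrict.differentiableAt.hasDerivAt.const_add (w x₀ t₀ - ψ x₀ t₀))
    (by filter_upwards [Ioo_mem_nhdsLT hst₀] with s' hs'
        linarith [hmin' x₀ hx₀ s' ⟨hs'.1.le, hs'.2.le.trans ht₀.2⟩])
    (by ring) ((contDiffAt_const (c := w x₀ t₀ - ψ x₀ t₀)).add hstrict.contDiffAt)
    (by filter_upwards [hnhds] with y hy
        linarith [hmin' y hy t₀ ht₀])
    (by ring)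
  have hΔ : Δ (fun y => (w x₀ t₀ - ψ x₀ t₀) + ψ y t₀) x₀ = Δ (fun y => ψ y t₀) x₀ := by
    simpa using laplacian_quadratic_comp (w x₀ t₀ - ψ x₀ t₀) 1 0 hstrict.contDiffAt
  rw [hΔ, abs_of_nonneg hw₀] at htouch
  nlinarith [hstrict.lt, mul_nonneg hL (neg_nonneg.mpr hm.le)]

end Supersolution

section Spreading

variable {E : Type*} [NormedAddCommGroup E] {ε lam δ κ r s t : ℝ} {w : E → ℝ → ℝ} {x y : E}

/-- A nonnegative function supported at time `t ≥ s` in the ball around `y` of squared radius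
`δ² + κ(t - s)`. For large `lam` it is a strict subsolution where it is positive, and so carries
the positivity of a supersolution to larger balls at later times. -/
def spreadingBarrier (ε lam δ κ : ℝ) (y : E) (s : ℝ) (x : E) (t : ℝ) : ℝ :=
  ε * Real.exp (-lam * (t - s)) * max (δ ^ 2 + κ * (t - s) - ‖x - y‖ ^ 2) 0 ^ 2

theorem continuous_spreadingBarrier :
    Continuous fun p : E × ℝ => spreadingBarrier ε lam δ κ y s p.1 p.2 := by
  unfold spreadingBarrier
  fun_prop

theorem lt_of_spreadingBarrier_pos (h : 0 < spreadingBarrier ε lam δ κ y s x t) :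
    ‖x - y‖ ^ 2 < δ ^ 2 + κ * (t - s) := by
  by_contra! hle
  simp [spreadingBarrier, max_eq_right (sub_nonpos.mpr hle)] at h

theorem spreadingBarrier_of_lt (h : ‖x - y‖ ^ 2 < δ ^ 2 + κ * (t - s)) :
    spreadingBarrier ε lam δ κ y s x t
      = ε * Real.exp (-lam * (t - s)) * (δ ^ 2 + κ * (t - s) - ‖x - y‖ ^ 2) ^ 2 := by
  rw [spreadingBarrier, max_eq_left (sub_nonneg.mpr h.le)]

theorem spreadingBarrier_pos_of_lt (hε : 0 < ε) (h : ‖x - y‖ ^ 2 < δ ^ 2 + κ * (t - s)) :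
    0 < spreadingBarrier ε lam δ κ y s x t := by
  rw [spreadingBarrier_of_lt h]
  have := sub_pos.mpr h
  positivity

theorem hasDerivAt_spreadingBarrier (h : ‖x - y‖ ^ 2 < δ ^ 2 + κ * (t - s)) :
    HasDerivAt (spreadingBarrier ε lam δ κ y s x)
      (ε * Real.exp (-lam * (t - s)) * (2 * κ * (δ ^ 2 + κ * (t - s) - ‖x - y‖ ^ 2)
        - lam * (δ ^ 2 + κ * (t - s) - ‖x - y‖ ^ 2) ^ 2)) t := by
  have hsupp : ∀ᶠ t' in 𝓝 t, ‖x - y‖ ^ 2 < δ ^ 2 + κ * (t' - s) :=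
    (show ContinuousAt (fun t' => δ ^ 2 + κ * (t' - s)) t by fun_prop).eventually_const_lt h
  have hsub := (hasDerivAt_id t).sub_const s
  have hexp := (hsub.const_mul (-lam)).exp.const_mul ε
  have hsq := (((hsub.const_mul κ).const_add (δ ^ 2)).sub_const (‖x - y‖ ^ 2)).pow 2
  refine ((hexp.mul hsq).congr_of_eventuallyEq ?_).congr_deriv ?_
  · exact hsupp.mono fun t' ht' => spreadingBarrier_of_lt ht'
  · simp
    ring

theorem spreadingBarrier_initial_le (hε : 0 ≤ ε) (hδ : 0 ≤ δ) (hw : 0 ≤ w x s)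
    (hball : ‖x - y‖ < δ → ε * δ ^ 4 ≤ w x s) : spreadingBarrier ε lam δ κ y s x s ≤ w x s := by
  rcases le_or_gt (spreadingBarrier ε lam δ κ y s x s) 0 with hle | hpos
  · exact hle.trans hw
  have hsupp := lt_of_spreadingBarrier_pos hpos
  rw [spreadingBarrier_of_lt hsupp]
  simp only [sub_self, mul_zero, add_zero, Real.exp_zero, mul_one] at hsupp ⊢
  refine le_trans ?_ (hball (lt_of_pow_lt_pow_left₀ 2 hδ hsupp))
  have : (δ ^ 2 - ‖x - y‖ ^ 2) ^ 2 ≤ (δ ^ 2) ^ 2 :=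
    pow_le_pow_left₀ (sub_nonneg.mpr hsupp.le) (sub_le_self _ (sq_nonneg _)) 2
  calc ε * (δ ^ 2 - ‖x - y‖ ^ 2) ^ 2 ≤ ε * (δ ^ 2) ^ 2 := by gcongr
    _ = ε * δ ^ 4 := by ring

theorem exists_pos_forall_norm_sub_lt_half_le {f : E → ℝ} (hf : ContinuousAt f y) (hpos : 0 < f y)
    (hr : 0 < r) : ∃ δ > 0, δ < r ∧ ∀ x, ‖x - y‖ < δ → f y / 2 ≤ f x := by
  obtain ⟨δ, hδ, hball⟩ :=
    Metric.eventually_nhds_iff_ball.mp (hf.eventually_const_lt (half_lt_self hpos))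
  refine ⟨min δ (r / 2), by positivity, (min_le_right _ _).trans_lt (half_lt_self hr),
    fun x hx => (hball x ?_).le⟩
  exact mem_ball_iff_norm.mpr (hx.trans_le (min_le_left _ _))

variable [InnerProductSpace ℝ E]

theorem spreadingBarrier_eventuallyEq (h : ‖x - y‖ ^ 2 < δ ^ 2 + κ * (t - s)) :
    (fun x' => spreadingBarrier ε lam δ κ y s x' t) =ᶠ[𝓝 x] fun x' =>
      0 + 0 * paraboloid (δ ^ 2 + κ * (t - s) - ‖y‖ ^ 2) ((2 : ℝ) • y) (-1) x'
        + ε * Real.exp (-lam * (t - s))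
          * paraboloid (δ ^ 2 + κ * (t - s) - ‖y‖ ^ 2) ((2 : ℝ) • y) (-1) x' ^ 2 := by
  have hsupp : ∀ᶠ x' in 𝓝 x, ‖x' - y‖ ^ 2 < δ ^ 2 + κ * (t - s) :=
    (show ContinuousAt (fun x' => ‖x' - y‖ ^ 2) x by fun_prop).eventually_lt_const h
  filter_upwards [hsupp] with x' hx'
  rw [spreadingBarrier_of_lt hx', norm_sub_sq_real, paraboloid, real_inner_smul_right]
  ring

theorem contDiffAt_spreadingBarrier (h : ‖x - y‖ ^ 2 < δ ^ 2 + κ * (t - s)) :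
    ContDiffAt ℝ 2 (fun x' => spreadingBarrier ε lam δ κ y s x' t) x := by
  have := contDiff_paraboloid (δ ^ 2 + κ * (t - s) - ‖y‖ ^ 2) ((2 : ℝ) • y) (-1) (n := 2)
  exact ContDiffAt.congr_of_eventuallyEq (ContDiff.contDiffAt (by fun_prop))
    (spreadingBarrier_eventuallyEq h)

variable [FiniteDimensional ℝ E] {L : ℝ} {Ω : Set E} {z : E}

theorem laplacian_spreadingBarrier (h : ‖x - y‖ ^ 2 < δ ^ 2 + κ * (t - s)) :
    Δ (fun x' => spreadingBarrier ε lam δ κ y s x' t) x = ε * Real.exp (-lam * (t - s))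
      * (8 * ‖x - y‖ ^ 2 - 4 * finrank ℝ E * (δ ^ 2 + κ * (t - s) - ‖x - y‖ ^ 2)) := by
  have hgrad : ‖(2 : ℝ) • y + (2 * (-1 : ℝ)) • x‖ ^ 2 = 4 * ‖x - y‖ ^ 2 := by
    have : (2 : ℝ) • y + (2 * (-1 : ℝ)) • x = (-2 : ℝ) • (x - y) := by module
    rw [this, norm_smul, mul_pow]
    norm_num
  have hvalue : paraboloid (δ ^ 2 + κ * (t - s) - ‖y‖ ^ 2) ((2 : ℝ) • y) (-1) x
      = δ ^ 2 + κ * (t - s) - ‖x - y‖ ^ 2 := by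
    rw [norm_sub_sq_real, paraboloid, real_inner_smul_right]
    ring
  rw [(InnerProductSpace.laplacian_congr_nhds (spreadingBarrier_eventuallyEq h)).self_of_nhds,
    laplacian_quadratic_comp _ _ _ (contDiff_paraboloid _ _ _).contDiffAt, laplacian_paraboloid,
    gradient_paraboloid, hgrad, hvalue]
  ring

theorem isStrictSubsolutionAt_spreadingBarrier (hε : 0 < ε) (hδ : 0 < δ) (hκ : 0 ≤ κ)
    (hlam : lam = L + (2 * κ + 8 + 4 * finrank ℝ E) ^ 2 / (16 * δ ^ 2)) (hst : s ≤ t)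
    (h : ‖x - y‖ ^ 2 < δ ^ 2 + κ * (t - s)) :
    IsStrictSubsolutionAt L (spreadingBarrier ε lam δ κ y s) x t := by
  refine ⟨(hasDerivAt_spreadingBarrier h).differentiableAt, contDiffAt_spreadingBarrier h, ?_⟩
  rw [(hasDerivAt_spreadingBarrier h).deriv, laplacian_spreadingBarrier h, spreadingBarrier_of_lt h]
  have : 0 ≤ κ * (t - s) := mul_nonneg hκ (sub_nonneg.mpr hst)
  set G := δ ^ 2 + κ * (t - s) - ‖x - y‖ ^ 2
  have hnorm : ‖x - y‖ ^ 2 = δ ^ 2 + κ * (t - s) - G := by ring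
  set n : ℝ := (finrank ℝ E : ℝ)
  -- The choice of `lam` completes the square in `G`.
  have hsquare : 8 * (δ ^ 2 + κ * (t - s) - G) - 4 * n * G - L * G ^ 2 - 2 * κ * G + lam * G ^ 2
      = 4 * δ ^ 2 + 8 * (κ * (t - s)) + (2 * δ - (2 * κ + 8 + 4 * n) * G / (4 * δ)) ^ 2 := by
    rw [hlam]
    field_simp
    ring
  have hpos : 0 < 4 * δ ^ 2 + 8 * (κ * (t - s))
      + (2 * δ - (2 * κ + 8 + 4 * n) * G / (4 * δ)) ^ 2 := by positivity
  rw [← hsquare] at hpos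
  have := mul_pos (mul_pos hε (Real.exp_pos (-lam * (t - s)))) hpos
  rw [hnorm]
  linarith

theorem IsSupersolution.pos_of_pos_center (hw : IsSupersolution Ω L w) (hL : 0 ≤ L)
    (hnonneg : ∀ x ∈ Ω, ∀ t, 0 ≤ t → 0 ≤ w x t) (hball : closedBall y r ⊆ Ω) (hs : 0 ≤ s)
    (hst : s < t) (hz : z ∈ ball y r) (hpos : 0 < w y s) : 0 < w z t := by
  have hr : 0 < r := pos_of_mem_ball hz
  have hcont : ContinuousAt (fun x => w x s) y := by
    have : ContinuousOn (fun x => w x s) (closedBall y r) :=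
      hw.continuousOn.comp (f := fun x => (x, s)) (by fun_prop)
        fun x hx => ⟨subset_closure (hball hx), hs⟩
    exact this.continuousAt (closedBall_mem_nhds y hr)
  obtain ⟨δ, hδ, hδr, hhalf⟩ := exists_pos_forall_norm_sub_lt_half_le hcont hpos hr
  have hts : 0 < t - s := sub_pos.mpr hst
  obtain ⟨ε, hε, hεδ⟩ : ∃ ε > 0, ε * δ ^ 4 = w y s / 2 :=
    ⟨w y s / 2 / δ ^ 4, by positivity, by field_simp⟩
  obtain ⟨κ, hκ, hκr⟩ : ∃ κ ≥ 0, κ * (t - s) = r ^ 2 - δ ^ 2 :=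
    ⟨(r ^ 2 - δ ^ 2) / (t - s), div_nonneg (by nlinarith) hts.le, by field_simp⟩
  have hz_supp : ‖z - y‖ ^ 2 < δ ^ 2 + κ * (t - s) := by
    rw [hκr, add_sub_cancel]
    exact pow_lt_pow_left₀ (mem_ball_iff_norm.mp hz) (norm_nonneg _) two_ne_zero
  obtain ⟨lam, hlam⟩ : ∃ lam, lam = L + (2 * κ + 8 + 4 * finrank ℝ E) ^ 2 / (16 * δ ^ 2) :=
    ⟨_, rfl⟩
  refine (spreadingBarrier_pos_of_lt (lam := lam) hε hz_supp).trans_le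
    (hw.ge_of_isStrictSubsolutionAt hL hnonneg (isCompact_closedBall y r) hball hs
      continuous_spreadingBarrier.continuousOn (fun x hx => ?_) (fun x _ t' ht' hψ => ?_)
      (ball_subset_closedBall hz) ⟨hst.le, le_rfl⟩)
  · exact spreadingBarrier_initial_le hε.le hδ.le (hnonneg x (hball hx) s hs)
      fun h => hεδ.trans_le (hhalf x h)
  · have hsupp := lt_of_spreadingBarrier_pos hψ
    have hκ_le : κ * (t' - s) ≤ κ * (t - s) :=
      mul_le_mul_of_nonneg_left (sub_le_sub_right ht'.2 s) hκ
    refine ⟨closedBall_mem_nhds_of_mem (mem_ball_iff_norm.mpr ?_),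
      isStrictSubsolutionAt_spreadingBarrier hε hδ hκ hlam ht'.1.le hsupp⟩
    exact lt_of_pow_lt_pow_left₀ 2 hr.le (by linarith)

end Spreading

section Periodic

theorem apply_add_nat_mul_of_periodic_on_Ici {α : Type*} {f : ℝ → α} {T t : ℝ}
    (hf : ∀ t, 0 ≤ t → f (t + T) = f t) (hT : 0 ≤ T) (ht : 0 ≤ t) (n : ℕ) :
    f (t + n * T) = f t := by
  induction n with
  | zero => simp
  | succ n ih =>
    rw [← ih, ← hf (t + n * T) (by positivity)]
    congr 1
    push_cast
    ring

theorem exists_mem_Icc_apply_eq_of_periodic_on_Ici {α : Type*} {f : ℝ → α} {T t : ℝ}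
    (hf : ∀ t, 0 ≤ t → f (t + T) = f t) (hT : 0 < T) (ht : 0 ≤ t) :
    ∃ t' ∈ Icc T (2 * T), f t' = f t := by
  have hfloor_le : ⌊t / T⌋₊ * T ≤ t := (le_div_iff₀ hT).mp (Nat.floor_le (by positivity))
  have hlt_floor : t < (⌊t / T⌋₊ + 1) * T := (div_lt_iff₀ hT).mp (Nat.lt_floor_add_one _)
  refine ⟨t - ⌊t / T⌋₊ * T + T, ⟨by linarith, by linarith⟩, ?_⟩
  rw [hf _ (sub_nonneg.mpr hfloor_le),
    ← apply_add_nat_mul_of_periodic_on_Ici hf hT.le (sub_nonneg.mpr hfloor_le) ⌊t / T⌋₊,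
    sub_add_cancel]

theorem add_period_of_mem_closure {X : Type*} [TopologicalSpace X] {Ω : Set X} {u : X → ℝ → ℝ}
    {T t : ℝ} {x : X} (hu : ContinuousOn (fun p : X × ℝ => u p.1 p.2) (closure Ω ×ˢ Ici 0))
    (hT : 0 ≤ T) (hper : ∀ x ∈ Ω, ∀ t, 0 ≤ t → u x (t + T) = u x t) (hx : x ∈ closure Ω)
    (ht : 0 ≤ t) : u x (t + T) = u x t := by
  have hslice : ∀ s, 0 ≤ s → ContinuousOn (fun y => u y s) (closure Ω) := fun s hs =>
    hu.comp (f := fun y => (y, s)) (by fun_prop) fun y hy => ⟨hy, hs⟩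
  have heq : EqOn (fun y => u y (t + T)) (fun y => u y t) Ω := fun y hy => hper y hy t ht
  exact heq.of_subset_closure (hslice _ (by positivity)) (hslice t ht) subset_closure subset_rfl hx

theorem exists_forall_mem_Icc_of_periodic {X : Type*} [TopologicalSpace X] {K : Set X}
    {u : X → ℝ → ℝ} {T : ℝ} (hK : IsCompact K)
    (hu : ContinuousOn (fun p : X × ℝ => u p.1 p.2) (K ×ˢ Ici 0)) (hT : 0 < T)
    (hper : ∀ x ∈ K, ∀ t, 0 ≤ t → u x (t + T) = u x t) :
    ∃ C > 0, ∀ x ∈ K, ∀ t, 0 ≤ t → u x t ∈ Icc (-C) C := by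
  obtain ⟨C, hC⟩ := (hK.prod (isCompact_Icc (a := T) (b := 2 * T))).exists_bound_of_continuousOn
    (hu.mono (prod_mono_right fun t ht => hT.le.trans ht.1))
  refine ⟨max C 1, by positivity, fun x hx t ht => ?_⟩
  obtain ⟨t', ht', heq⟩ := exists_mem_Icc_apply_eq_of_periodic_on_Ici (hper x hx) hT ht
  exact heq ▸ abs_le.mp ((hC (x, t') ⟨hx, ht'⟩).trans (le_max_left C 1))

variable {E : Type*} [NormedAddCommGroup E] [InnerProductSpace ℝ E] [FiniteDimensional ℝ E]
  {Ω : Set E} {L T s t : ℝ} {w : E → ℝ → ℝ} {P : E → ℝ} {x y : E}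

theorem IsSupersolution.pos_of_periodic (hw : IsSupersolution Ω L w) (hL : 0 ≤ L)
    (hΩ : IsOpen Ω) (hΩ_conn : IsPreconnected Ω) (hT : 0 < T)
    (hper : ∀ x ∈ Ω, ∀ t, 0 ≤ t → w x (t + T) = w x t)
    (hnonneg : ∀ x ∈ Ω, ∀ t, 0 ≤ t → 0 ≤ w x t) (hy : y ∈ Ω) (hs : 0 ≤ s) (hpos : 0 < w y s)
    (hx : x ∈ Ω) (ht : 0 ≤ t) : 0 < w x t := by
  have hspread : ∀ y z r s, closedBall y r ⊆ Ω → z ∈ ball y r → 0 ≤ s → 0 < w y s →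
      ∀ t, 0 ≤ t → 0 < w z t := by
    intro y z r s hball hz hs hpos t ht
    obtain ⟨n, hn⟩ := exists_nat_gt (s / T)
    rw [div_lt_iff₀ hT] at hn
    rw [← apply_add_nat_mul_of_periodic_on_Ici (hper z (hball (ball_subset_closedBall hz))) hT.le
      ht n]
    exact hw.pos_of_pos_center hL hnonneg hball hs (by linarith) hz hpos
  have hball : ∀ x ∈ Ω, ∃ r > 0, closedBall x r ⊆ Ω := fun x hx =>
    nhds_basis_closedBall.mem_iff.mp (hΩ.mem_nhds hx)
  set U := {x ∈ Ω | ∀ t, 0 ≤ t → 0 < w x t}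
  have hU_open : IsOpen U := isOpen_iff_mem_nhds.mpr fun x hx => by
    obtain ⟨r, hr, hrΩ⟩ := hball x hx.1
    filter_upwards [ball_mem_nhds x hr] with z hz
    exact ⟨hrΩ (ball_subset_closedBall hz), hspread x z r 0 hrΩ hz le_rfl (hx.2 0 le_rfl)⟩
  have hU_nonempty : (Ω ∩ U).Nonempty := by
    obtain ⟨r, hr, hrΩ⟩ := hball y hy
    exact ⟨y, hy, hy, hspread y y r s hrΩ (mem_ball_self hr) hs hpos⟩
  refine (hΩ_conn.subset_of_closure_inter_subset hU_open hU_nonempty ?_ hx).2 t ht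
  rintro x ⟨hx_closure, hx⟩
  obtain ⟨r, hr, hrΩ⟩ := hball x hx
  obtain ⟨z, hzU, hxz⟩ := Metric.mem_closure_iff.mp hx_closure (r / 2) (half_pos hr)
  refine ⟨hx, hspread z x (r / 2) 0 ?_ hxz le_rfl (hzU.2 0 le_rfl)⟩
  refine (closedBall_subset_closedBall' ?_).trans hrΩ
  rw [dist_comm]
  linarith

/-- At a negative minimum of `w / P` the function `m * φ`, with `m` the minimal value, touches `w`
from below. -/
theorem IsSupersolution.nonneg_of_forall_barrier (hw : IsSupersolution Ω L w) (hΩ : IsOpen Ω)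
    (hΩ_bdd : Bornology.IsBounded Ω) (hT : 0 < T)
    (hper : ∀ x ∈ closure Ω, ∀ t, 0 ≤ t → w x (t + T) = w x t)
    (hfrontier : ∀ x ∈ frontier Ω, ∀ t, 0 ≤ t → 0 ≤ w x t)
    (hP : ContinuousOn P (closure Ω)) (hP_pos : ∀ x ∈ closure Ω, 0 < P x)
    (hbarrier : ∀ x ∈ Ω, (∀ t, 0 ≤ t → 0 ≤ w x t) ∨ ∃ φ : E → ℝ,
      ContDiffAt ℝ 2 φ x ∧ φ x = P x ∧ (∀ᶠ y in 𝓝 x, P y ≤ φ y) ∧ Δ φ x < -(L * P x))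
    (hx : x ∈ Ω) (ht : 0 ≤ t) : 0 ≤ w x t := by
  by_contra! hneg
  obtain ⟨t₁, ht₁, ht₁_eq⟩ :=
    exists_mem_Icc_apply_eq_of_periodic_on_Ici (hper x (subset_closure hx)) hT ht
  obtain ⟨⟨x₀, t₀⟩, ⟨hx₀, ht₀⟩, m, hm, heq, hle⟩ := exists_eq_mul_and_forall_mul_le
    (hΩ_bdd.isCompact_closure.prod (isCompact_Icc (a := T) (b := 2 * T)))
    (hw.continuousOn.mono (prod_mono_right (Icc_subset_Ici_self.trans (Ici_subset_Ici.mpr hT.le))))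
    (hP.comp continuousOn_fst fun _ h => h.1) (fun p hp => hP_pos p.1 hp.1)
    ⟨(x, t₁), ⟨subset_closure hx, ht₁⟩, ht₁_eq ▸ hneg⟩
  simp only [Function.comp_apply] at hx₀ ht₀ heq hle
  have ht₀_pos : 0 < t₀ := hT.trans_le ht₀.1
  have hle' : ∀ y ∈ closure Ω, ∀ s, 0 ≤ s → m * P y ≤ w y s := fun y hy s hs => by
    obtain ⟨s', hs', hs'_eq⟩ := exists_mem_Icc_apply_eq_of_periodic_on_Ici (hper y hy) hT hs
    exact hs'_eq ▸ hle (y, s') ⟨hy, hs'⟩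
  have hw_neg : w x₀ t₀ < 0 := heq ▸ mul_neg_of_neg_of_pos hm (hP_pos x₀ hx₀)
  have hx₀Ω : x₀ ∈ Ω := by
    rw [closure_eq_self_union_frontier] at hx₀
    exact hx₀.resolve_right fun h => (hfrontier x₀ h t₀ ht₀_pos.le).not_gt hw_neg
  obtain ⟨φ, hφ, hφ_eq, hφ_le, hφ_lt⟩ :=
    (hbarrier x₀ hx₀Ω).resolve_left fun h => (h t₀ ht₀_pos.le).not_gt hw_neg
  have htouch := (hw.isSupersolutionAt x₀ hx₀Ω t₀ ht₀_pos).le_of_touch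
    (hasDerivAt_const t₀ (w x₀ t₀))
    (by filter_upwards [Ioo_mem_nhdsLT ht₀_pos] with s hs using heq ▸ hle' x₀ hx₀ s hs.1.le)
    rfl (hφ.const_smul m)
    (by filter_upwards [hφ_le, hΩ.mem_nhds hx₀Ω] with y hy hyΩ
        exact (mul_le_mul_of_nonpos_left hy hm.le).trans
          (hle' y (subset_closure hyΩ) t₀ ht₀_pos.le))
    (by simp only [hφ_eq, heq, smul_eq_mul])
  have hΔ : Δ (fun y => m • φ y) x₀ = m * Δ φ x₀ := InnerProductSpace.laplacian_smul m hφ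
  rw [hΔ, abs_of_neg hw_neg, heq] at htouch
  nlinarith

end Periodic

section Shell

variable {E : Type*} [NormedAddCommGroup E] {ρ τ : ℝ}

/-- The open ball (if `ρ < 0`) or annulus centered at the origin, in terms of the squared radii `ρ`
and `τ`, so that the functions defining its boundary are smooth. -/
def openShell (ρ τ : ℝ) : Set E := {x | ‖x‖ ^ 2 ∈ Ioo ρ τ}

/-- The closed counterpart of `openShell`. -/
def closedShell (ρ τ : ℝ) : Set E := {x | ‖x‖ ^ 2 ∈ Icc ρ τ}

theorem openShell_subset_closedShell : openShell ρ τ ⊆ (closedShell ρ τ : Set E) :=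
  fun _ hx => ⟨hx.1.le, hx.2.le⟩

theorem isOpen_openShell : IsOpen (openShell ρ τ : Set E) :=
  (isOpen_Ioo (a := ρ) (b := τ)).preimage (f := fun x : E => ‖x‖ ^ 2) (by fun_prop)

theorem isClosed_closedShell : IsClosed (closedShell ρ τ : Set E) :=
  (isClosed_Icc (a := ρ) (b := τ)).preimage (f := fun x : E => ‖x‖ ^ 2) (by fun_prop)

theorem isBounded_closedShell : Bornology.IsBounded (closedShell ρ τ : Set E) :=
  isBounded_closedBall.subset fun _ hx => mem_closedBall_zero_iff.mpr (Real.le_sqrt_of_sq_le hx.2)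

theorem isCompact_closedShell [ProperSpace E] : IsCompact (closedShell ρ τ : Set E) :=
  isCompact_of_isClosed_isBounded isClosed_closedShell isBounded_closedShell

theorem closure_openShell [NormedSpace ℝ E] (hρτ : ρ < τ) (hτ : 0 < τ) (hρ : ρ ≠ 0) :
    closure (openShell ρ τ) = (closedShell ρ τ : Set E) := by
  refine (closure_minimal openShell_subset_closedShell isClosed_closedShell).antisymm
    fun x hx => ?_
  rcases eq_or_ne x 0 with rfl | hx₀
  · rw [closedShell, mem_ofPred_eq, norm_zero, zero_pow two_ne_zero] at hx
    refine subset_closure ?_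
    rw [openShell, mem_ofPred_eq, norm_zero, zero_pow two_ne_zero]
    exact ⟨hx.1.lt_of_ne hρ, hτ⟩
  have hnorm : 0 < ‖x‖ := norm_pos_iff.mpr hx₀
  have hradius : ‖x‖ ^ 2 ∈ closure (Ioo (max ρ 0) τ) := by
    rw [closure_Ioo (max_lt hρτ hτ).ne]
    exact ⟨max_le hx.1 (by positivity), hx.2⟩
  have hmaps : MapsTo (fun r => (√r / ‖x‖) • x) (Ioo (max ρ 0) τ) (openShell ρ τ) := by
    intro r hr
    have hr₀ : 0 ≤ r := ((le_max_right ρ 0).trans_lt hr.1).le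
    rw [openShell, mem_ofPred_eq, norm_smul, Real.norm_of_nonneg (by positivity),
      div_mul_cancel₀ _ hnorm.ne', Real.sq_sqrt hr₀]
    exact ⟨(le_max_left ρ 0).trans_lt hr.1, hr.2⟩
  simpa [Real.sqrt_sq hnorm.le, hnorm.ne'] using map_mem_closure (by fun_prop) hradius hmaps

end Shell

section HalfShell

variable {E : Type*} [NormedAddCommGroup E] [InnerProductSpace ℝ E] {ρ τ : ℝ} {v : E}

/-- The part of the open shell on the side of `v` of the hyperplane orthogonal to `v`. -/
def halfShell (ρ τ : ℝ) (v : E) : Set E := {x ∈ openShell ρ τ | 0 < ⟪x, v⟫}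

theorem isOpen_halfShell : IsOpen (halfShell ρ τ v) :=
  isOpen_openShell.inter (isOpen_Ioi.preimage (f := fun x : E => ⟪x, v⟫) (by fun_prop))

theorem isBounded_halfShell : Bornology.IsBounded (halfShell ρ τ v) :=
  isBounded_closedShell.subset fun _ hx => openShell_subset_closedShell hx.1

theorem closure_halfShell_subset : closure (halfShell ρ τ v) ⊆ {x ∈ closedShell ρ τ | 0 ≤ ⟪x, v⟫} :=
  closure_minimal (fun _ hx => ⟨openShell_subset_closedShell hx.1, hx.2.le⟩)
    (isClosed_closedShell.inter
      (isClosed_Ici.preimage (f := fun x : E => ⟪x, v⟫) (by fun_prop)))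

/-- In polar coordinates the half shell is a product of convex sets. -/
theorem isPreconnected_halfShell : IsPreconnected (halfShell ρ τ v) := by
  have hradii : OrdConnected {s : ℝ | 0 < s ∧ ρ < s ^ 2 ∧ s ^ 2 < τ} :=
    ⟨fun a ha b hb c hc => ⟨ha.1.trans_le hc.1, ha.2.1.trans_le (pow_le_pow_left₀ ha.1.le hc.1 2),
      (pow_le_pow_left₀ (ha.1.le.trans hc.1) hc.2 2).trans_lt hb.2.2⟩⟩
  have hdirections : Convex ℝ {x : E | 0 < ⟪x, v⟫} :=
    convex_halfSpace_gt (f := fun x => ⟪x, v⟫) ⟨fun x y => inner_add_left x y v,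
      fun c x => real_inner_smul_left x v c⟩ 0
  have hne : ∀ {y : E}, 0 < ⟪y, v⟫ → y ≠ 0 := by
    rintro y hy rfl
    simp at hy
  convert (hdirections.isPreconnected.prod hradii.isPreconnected).image
    (fun p : E × ℝ => (p.2 / ‖p.1‖) • p.1)
    (ContinuousOn.smul (continuousOn_snd.div (by fun_prop) fun p hp =>
      norm_ne_zero_iff.mpr (hne hp.1)) continuousOn_fst) using 1
  ext x
  constructor
  · rintro ⟨hx, hxv⟩
    have hnorm : 0 < ‖x‖ := norm_pos_iff.mpr (hne hxv)
    exact ⟨(x, ‖x‖), ⟨hxv, hnorm, hx⟩, by simp [hnorm.ne']⟩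
  · rintro ⟨⟨y, s⟩, ⟨hyv : 0 < ⟪y, v⟫, hs : 0 < s, hs_mem⟩, rfl⟩
    have hnorm : 0 < ‖y‖ := norm_pos_iff.mpr (hne hyv)
    have hpolar : ‖(s / ‖y‖) • y‖ = s := by
      rw [norm_smul, Real.norm_of_nonneg (by positivity), div_mul_cancel₀ _ hnorm.ne']
    refine ⟨show ‖(s / ‖y‖) • y‖ ^ 2 ∈ Ioo ρ τ from hpolar.symm ▸ hs_mem, ?_⟩
    simp only [real_inner_smul_left]
    positivity

end HalfShell

section NarrowDomain

/-- A concave function of the depth below the boundary, increasing up to the depth `δ`. -/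
def depthProfile (K δ s : ℝ) : ℝ := 1 + 2 * K * δ * s + -K * s ^ 2

theorem continuous_depthProfile {K δ : ℝ} : Continuous (depthProfile K δ) := by
  unfold depthProfile
  fun_prop

theorem monotoneOn_depthProfile {K δ : ℝ} (hK : 0 ≤ K) : MonotoneOn (depthProfile K δ) (Iic δ) := by
  intro a ha b hb hab
  have : 0 ≤ K * ((b - a) * (2 * δ - a - b)) :=
    mul_nonneg hK (mul_nonneg (sub_nonneg.mpr hab) (by linarith [mem_Iic.mp ha, mem_Iic.mp hb]))
  unfold depthProfile
  linarith

theorem one_le_depthProfile {K δ s : ℝ} (hK : 0 ≤ K) (hs : 0 ≤ s) (hsδ : s ≤ δ) :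
    1 ≤ depthProfile K δ s := by
  simpa [depthProfile] using monotoneOn_depthProfile hK (hs.trans hsδ) hsδ hs

theorem depthProfile_le_two {K δ s : ℝ} (hK : 0 ≤ K) (hKδ : K * δ ^ 2 ≤ 1) :
    depthProfile K δ s ≤ 2 := by
  have : 0 ≤ K * (δ - s) ^ 2 := by positivity
  unfold depthProfile
  linarith

variable {E : Type*} [NormedAddCommGroup E] [InnerProductSpace ℝ E] {K L T ρ τ δ γ t : ℝ}
  {v x : E} {w : E → ℝ → ℝ}

/-- The depth of `x` below the boundary of the half shell, measured by the functions defining the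
boundary and truncated at `δ`. -/
def truncatedDepth (ρ τ δ : ℝ) (v x : E) : ℝ :=
  min (min (min ⟪x, v⟫ (τ - ‖x‖ ^ 2)) (‖x‖ ^ 2 - ρ)) δ

theorem continuous_truncatedDepth : Continuous (truncatedDepth ρ τ δ v) := by
  unfold truncatedDepth
  fun_prop

theorem truncatedDepth_le : truncatedDepth ρ τ δ v x ≤ δ := min_le_right _ _

theorem truncatedDepth_nonneg (hδ : 0 ≤ δ) (hx : x ∈ closedShell ρ τ) (hxv : 0 ≤ ⟪x, v⟫) :
    0 ≤ truncatedDepth ρ τ δ v x :=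
  le_min (le_min (le_min hxv (sub_nonneg.mpr hx.2)) (sub_nonneg.mpr hx.1)) hδ

theorem exists_paraboloid_eq_truncatedDepth (hδ : 0 < δ) (hv : γ ≤ ‖v‖ ^ 2) (hγ : 0 ≤ γ)
    (hnδ : finrank ℝ E * δ ≤ γ) (hτ : γ + δ ≤ τ) (hρ : γ ≤ ρ ∨ ρ + δ ≤ 0)
    (hx : x ∈ closedShell ρ τ) (hxv : 0 ≤ ⟪x, v⟫) (hlt : truncatedDepth ρ τ δ v x < δ) :
    ∃ (a : ℝ) (k : E) (c : ℝ), paraboloid a k c x = truncatedDepth ρ τ δ v x ∧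
      (∀ y, truncatedDepth ρ τ δ v y ≤ paraboloid a k c y) ∧
      (δ - paraboloid a k c x) * (2 * c * finrank ℝ E) + γ ≤ ‖k + (2 * c) • x‖ ^ 2 := by
  have hdepth := truncatedDepth_nonneg hδ.le hx hxv
  have hle : ∀ y, truncatedDepth ρ τ δ v y ≤ min (min ⟪y, v⟫ (τ - ‖y‖ ^ 2)) (‖y‖ ^ 2 - ρ) :=
    fun y => min_le_left _ _
  have hactive : truncatedDepth ρ τ δ v x = min (min ⟪x, v⟫ (τ - ‖x‖ ^ 2)) (‖x‖ ^ 2 - ρ) :=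
    (min_choice _ _).resolve_right hlt.ne
  have hnorm : ∀ c : ℝ, c ^ 2 = 1 → ‖(0 : E) + (2 * c) • x‖ ^ 2 = 4 * ‖x‖ ^ 2 := by
    intro c hc
    rw [zero_add, norm_smul, mul_pow, Real.norm_eq_abs, sq_abs, mul_pow, hc]
    norm_num
  simp only [le_min_iff] at hle
  rcases min_choice (min ⟪x, v⟫ (τ - ‖x‖ ^ 2)) (‖x‖ ^ 2 - ρ) with h | h
  · rcases min_choice ⟪x, v⟫ (τ - ‖x‖ ^ 2) with h' | h' <;> rw [h, h'] at hactive
    · refine ⟨0, v, 0, by simp [paraboloid, hactive], fun y => ?_, by simpa using hv⟩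
      simpa [paraboloid] using (hle y).1.1
    · refine ⟨τ, 0, -1, by simp [paraboloid, hactive, sub_eq_add_neg], fun y => ?_, ?_⟩
      · simpa [paraboloid, sub_eq_add_neg] using (hle y).1.2
      · rw [hnorm _ (by norm_num)]
        simp only [paraboloid, inner_zero_right]
        have : 0 ≤ (δ - (τ - ‖x‖ ^ 2)) * finrank ℝ E :=
          mul_nonneg (by linarith) (Nat.cast_nonneg _)
        linarith
  · rw [h] at hactive
    refine ⟨-ρ, 0, 1, by simp [paraboloid, hactive]; ring, fun y => ?_, ?_⟩
    · have := (hle y).2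
      simp [paraboloid]
      linarith
    · have hγ_le : γ ≤ ‖x‖ ^ 2 := hρ.elim (fun h => h.trans hx.1) fun h => by
        linarith [sq_nonneg ‖x‖]
      rw [hnorm _ (by norm_num)]
      simp only [paraboloid, inner_zero_right]
      have : 0 ≤ (‖x‖ ^ 2 - ρ) * finrank ℝ E :=
        mul_nonneg (by linarith) (Nat.cast_nonneg _)
      linarith

variable [FiniteDimensional ℝ E]

theorem laplacian_depthProfile_paraboloid_le {a c : ℝ} {k : E} (hK : 0 ≤ K)
    (h : (δ - paraboloid a k c x) * (2 * c * finrank ℝ E) + γ ≤ ‖k + (2 * c) • x‖ ^ 2) :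
    Δ (fun y => depthProfile K δ (paraboloid a k c y)) x ≤ -(2 * (K * γ)) := by
  have hΔ : Δ (fun y => depthProfile K δ (paraboloid a k c y)) x
      = (2 * K * δ + 2 * -K * paraboloid a k c x) * (2 * c * finrank ℝ E)
        + 2 * -K * ‖k + (2 * c) • x‖ ^ 2 := by
    rw [← laplacian_paraboloid a k c x, ← gradient_paraboloid a k c x]
    exact laplacian_quadratic_comp 1 (2 * K * δ) (-K) (contDiff_paraboloid a k c).contDiffAt
  have := mul_le_mul_of_nonneg_left h hK
  rw [hΔ]
  linarith

theorem IsSupersolution.nonneg_of_nonneg_of_le_depth (hw : IsSupersolution (halfShell ρ τ v) L w)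
    (hL : 0 ≤ L) (hT : 0 < T) (hper : ∀ x ∈ closure (halfShell ρ τ v), ∀ t, 0 ≤ t →
      w x (t + T) = w x t)
    (hfrontier : ∀ x ∈ frontier (halfShell ρ τ v), ∀ t, 0 ≤ t → 0 ≤ w x t)
    (hδ : 0 < δ) (hγ : 0 < γ) (hv : γ ≤ ‖v‖ ^ 2) (hnδ : finrank ℝ E * δ ≤ γ) (hτ : γ + δ ≤ τ)
    (hρ : γ ≤ ρ ∨ ρ + δ ≤ 0) (hδγ : (L + 1) * δ ^ 2 ≤ γ)
    (hcore : ∀ x, δ ≤ ⟪x, v⟫ → δ ≤ ‖x‖ ^ 2 - ρ → δ ≤ τ - ‖x‖ ^ 2 → ∀ t, 0 ≤ t → 0 ≤ w x t)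
    (hx : x ∈ halfShell ρ τ v) (ht : 0 ≤ t) : 0 ≤ w x t := by
  obtain ⟨K, hK, hKγ, hKδ⟩ : ∃ K ≥ 0, K * γ = L + 1 ∧ K * δ ^ 2 ≤ 1 :=
    ⟨(L + 1) / γ, by positivity, by field_simp,
      by rwa [div_mul_eq_mul_div, div_le_one hγ]⟩
  have hprofile : ∀ x ∈ closure (halfShell ρ τ v),
      1 ≤ depthProfile K δ (truncatedDepth ρ τ δ v x) := fun x hx =>
    one_le_depthProfile hK (truncatedDepth_nonneg hδ.le (closure_halfShell_subset hx).1
      (closure_halfShell_subset hx).2) truncatedDepth_le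
  refine hw.nonneg_of_forall_barrier isOpen_halfShell isBounded_halfShell hT hper hfrontier
    (P := fun x => depthProfile K δ (truncatedDepth ρ τ δ v x))
    (continuous_depthProfile.comp continuous_truncatedDepth).continuousOn
    (fun x hx => zero_lt_one.trans_le (hprofile x hx)) (fun x hx => ?_) hx ht
  rcases (truncatedDepth_le (ρ := ρ) (τ := τ) (δ := δ) (v := v) (x := x)).eq_or_lt with heq | hlt
  · have := heq.ge
    simp only [truncatedDepth, le_min_iff] at this
    exact .inl (hcore x this.1.1.1 this.1.2 this.1.1.2)
  obtain ⟨a, k, c, hq, hq_le, hq_lap⟩ := exists_paraboloid_eq_truncatedDepth hδ hv hγ.le hnδ hτ hρ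
    (openShell_subset_closedShell hx.1) hx.2.le hlt
  have hq_cont : ContDiff ℝ 2 (paraboloid a k c) := contDiff_paraboloid a k c
  refine .inr ⟨fun y => depthProfile K δ (paraboloid a k c y), ?_, by simp only [hq], ?_, ?_⟩
  · unfold depthProfile
    exact ContDiff.contDiffAt (by fun_prop)
  · filter_upwards [hq_cont.continuous.continuousAt.eventually_lt_const (hq ▸ hlt)] with y hy
    exact monotoneOn_depthProfile hK ((hq_le y).trans hy.le) hy.le (hq_le y)
  · have := laplacian_depthProfile_paraboloid_le hK hq_lap
    have := mul_le_mul_of_nonneg_left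
      (depthProfile_le_two (s := truncatedDepth ρ τ δ v x) hK hKδ) hL
    linarith

end NarrowDomain

section Directions

variable {E : Type*} [NormedAddCommGroup E] [InnerProductSpace ℝ E] {ρ τ c t : ℝ} {u : E → ℝ → ℝ}
  {v x y : E}

/-- The difference between `u` and its reflection in the hyperplane orthogonal to `v`. -/
def reflDiff (u : E → ℝ → ℝ) (v x : E) (t : ℝ) : ℝ := u x t - u (hyperplaneReflection v x) t

theorem hyperplaneReflection_mem_openShell :
    hyperplaneReflection v x ∈ openShell ρ τ ↔ x ∈ openShell ρ τ := by
  simp only [openShell, mem_ofPred_eq, LinearIsometryEquiv.norm_map]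

theorem hyperplaneReflection_mem_closedShell :
    hyperplaneReflection v x ∈ closedShell ρ τ ↔ x ∈ closedShell ρ τ := by
  simp only [closedShell, mem_ofPred_eq, LinearIsometryEquiv.norm_map]

theorem reflDiff_smul (hc : c ≠ 0) : reflDiff u (c • v) = reflDiff u v := by
  funext x t
  rw [reflDiff, reflDiff, hyperplaneReflection_smul hc]

theorem reflDiff_hyperplaneReflection :
    reflDiff u v (hyperplaneReflection v x) t = -reflDiff u v x t := by
  rw [reflDiff, reflDiff, hyperplaneReflection_involutive, neg_sub]

theorem reflDiff_eq_zero_of_inner_eq_zero (h : ⟪x, v⟫ = 0) : reflDiff u v x t = 0 := by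
  rw [reflDiff, hyperplaneReflection_eq_self_of_inner_eq_zero h, sub_self]

theorem mem_halfShell_smul (hc : 0 < c) : x ∈ halfShell ρ τ (c • v) ↔ x ∈ halfShell ρ τ v := by
  simp only [halfShell, mem_ofPred_eq, real_inner_smul_right, mul_pos_iff_of_pos_left hc]

theorem ne_zero_of_mem_halfShell (h : x ∈ halfShell ρ τ v) : v ≠ 0 := by
  rintro rfl
  simp [halfShell] at h

theorem exists_pos_smul_mem_openShell (hρτ : ρ < τ) (hτ : 0 < τ) (hx : x ≠ 0) :
    ∃ k : ℝ, 0 < k ∧ k • x ∈ openShell ρ τ := by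
  obtain ⟨s, hs, hsτ⟩ := exists_between (max_lt hρτ hτ)
  have hs₀ : 0 < s := (le_max_right ρ 0).trans_lt hs
  have hnorm : 0 < ‖x‖ := norm_pos_iff.mpr hx
  refine ⟨√s / ‖x‖, by positivity, ?_⟩
  have : ‖(√s / ‖x‖) • x‖ ^ 2 = s := by
    rw [norm_smul, Real.norm_of_nonneg (by positivity), div_mul_cancel₀ _ hnorm.ne',
      Real.sq_sqrt hs₀.le]
  exact ⟨this.symm ▸ (le_max_left ρ 0).trans_lt hs, this.symm ▸ hsτ⟩

theorem halfShell_nonempty (hρτ : ρ < τ) (hτ : 0 < τ) (hv : v ≠ 0) :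
    (halfShell ρ τ v).Nonempty := by
  obtain ⟨k, hk, hkv⟩ := exists_pos_smul_mem_openShell hρτ hτ hv
  refine ⟨k • v, hkv, ?_⟩
  rw [real_inner_smul_left]
  exact mul_pos hk (real_inner_self_pos.mpr hv)

/-- The function `u` dominates its reflection on the side of `v` at all times. -/
def IsWeakDirection (ρ τ : ℝ) (u : E → ℝ → ℝ) (v : E) : Prop :=
  ∀ x ∈ halfShell ρ τ v, ∀ t, 0 ≤ t → 0 ≤ reflDiff u v x t

/-- The function `u` strictly dominates its reflection on the side of `v` at all times. The zero
vector is excluded, since its half shell is empty. -/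
def IsStrictDirection (ρ τ : ℝ) (u : E → ℝ → ℝ) (v : E) : Prop :=
  v ≠ 0 ∧ ∀ x ∈ halfShell ρ τ v, ∀ t, 0 ≤ t → 0 < reflDiff u v x t

/-- The function `u` is invariant under the reflection in direction `v` at all times. -/
def IsSymmDirection (ρ τ : ℝ) (u : E → ℝ → ℝ) (v : E) : Prop :=
  ∀ x ∈ openShell ρ τ, ∀ t, 0 ≤ t → u (hyperplaneReflection v x) t = u x t

theorem isSymmDirection_zero : IsSymmDirection ρ τ u 0 := fun x _ t _ => by
  rw [hyperplaneReflection_zero, LinearIsometryEquiv.coe_refl, id]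

theorem IsSymmDirection.smul (h : IsSymmDirection ρ τ u v) (c : ℝ) :
    IsSymmDirection ρ τ u (c • v) := by
  rcases eq_or_ne c 0 with rfl | hc
  · exact (zero_smul ℝ v).symm ▸ isSymmDirection_zero
  · simpa only [IsSymmDirection, hyperplaneReflection_smul hc] using h

theorem isSymmDirection_neg : IsSymmDirection ρ τ u (-v) ↔ IsSymmDirection ρ τ u v := by
  refine ⟨fun h => ?_, fun h => ?_⟩ <;> simpa using h.smul (-1)

theorem IsWeakDirection.smul (h : IsWeakDirection ρ τ u v) (hc : 0 < c) :
    IsWeakDirection ρ τ u (c • v) := by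
  simpa only [IsWeakDirection, reflDiff_smul hc.ne', mem_halfShell_smul hc] using h

theorem IsStrictDirection.isWeakDirection (h : IsStrictDirection ρ τ u v) :
    IsWeakDirection ρ τ u v :=
  fun x hx t ht => (h.2 x hx t ht).le

theorem IsSymmDirection.reflDiff_eq_zero (h : IsSymmDirection ρ τ u v) (hx : x ∈ openShell ρ τ)
    (ht : 0 ≤ t) : reflDiff u v x t = 0 := by
  rw [reflDiff, h x hx t ht, sub_self]

theorem IsSymmDirection.isWeakDirection (h : IsSymmDirection ρ τ u v) : IsWeakDirection ρ τ u v :=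
  fun _ hx _ ht => (h.reflDiff_eq_zero hx.1 ht).ge

theorem isSymmDirection_of_reflDiff_eq_zero
    (h : ∀ x ∈ halfShell ρ τ v, ∀ t, 0 ≤ t → reflDiff u v x t = 0) : IsSymmDirection ρ τ u v := by
  intro x hx t ht
  suffices reflDiff u v x t = 0 from (sub_eq_zero.mp this).symm
  rcases lt_trichotomy ⟪x, v⟫ 0 with hneg | hzero | hpos
  · rw [← neg_eq_zero, ← reflDiff_hyperplaneReflection]
    refine h _ ⟨hyperplaneReflection_mem_openShell.mpr hx, ?_⟩ t ht
    rwa [inner_hyperplaneReflection, neg_pos]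
  · exact reflDiff_eq_zero_of_inner_eq_zero hzero
  · exact h x ⟨hx, hpos⟩ t ht

theorem IsWeakDirection.isSymmDirection (h : IsWeakDirection ρ τ u v)
    (hneg : IsWeakDirection ρ τ u (-v)) : IsSymmDirection ρ τ u v := by
  refine isSymmDirection_of_reflDiff_eq_zero fun x hx t ht => le_antisymm ?_ (h x hx t ht)
  have := hneg (hyperplaneReflection v x) ⟨hyperplaneReflection_mem_openShell.mpr hx.1, by
    rw [inner_neg_right, inner_hyperplaneReflection, neg_neg]; exact hx.2⟩ t ht
  rwa [← neg_one_smul ℝ v, reflDiff_smul (by norm_num), reflDiff_hyperplaneReflection,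
    neg_nonneg] at this

theorem IsStrictDirection.not_isSymmDirection (hρτ : ρ < τ) (hτ : 0 < τ)
    (h : IsStrictDirection ρ τ u v) : ¬IsSymmDirection ρ τ u v := fun hsymm => by
  obtain ⟨x, hx⟩ := halfShell_nonempty hρτ hτ h.1
  exact (h.2 x hx 0 le_rfl).ne' (hsymm.reflDiff_eq_zero hx.1 le_rfl)

theorem hyperplaneReflection_eq_add_smul (h : ⟪x, v⟫ = -(c * ‖v‖ ^ 2 / 2)) :
    hyperplaneReflection v x = x + c • v := by
  rcases eq_or_ne v 0 with rfl | hv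
  · simp [hyperplaneReflection_zero]
  · have : ‖v‖ ≠ 0 := norm_ne_zero_iff.mpr hv
    rw [hyperplaneReflection_apply, h, sub_eq_add_neg, ← neg_smul]
    congr 2
    field_simp

theorem inner_sub_self_pos_of_norm_eq (h : ‖x‖ = ‖y‖) (hne : x ≠ y) : 0 < ⟪x, x - y⟫ := by
  have : 0 < ‖x - y‖ ^ 2 := pow_pos (norm_pos_iff.mpr (sub_ne_zero.mpr hne)) 2
  rw [norm_sub_sq_real, ← h] at this
  rw [inner_sub_right, real_inner_self_eq_norm_sq]
  linarith

end Directions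

section SymmetricPairs

variable {E : Type*} [NormedAddCommGroup E] [InnerProductSpace ℝ E] [FiniteDimensional ℝ E]
  {ρ τ : ℝ} {u : E → ℝ → ℝ} {a b : E}

theorem exists_forall_inner_eq_of_linearIndependent {ι : Type*} {v : ι → E}
    (hv : LinearIndependent ℝ v) (c : ι → ℝ) : ∃ x : E, ∀ i, ⟪x, v i⟫ = c i := by
  obtain ⟨f, hf⟩ := ((Basis.span hv).constr ℝ c).exists_extend
  refine ⟨(InnerProductSpace.toDual ℝ E).symm f.toContinuousLinearMap, fun i => ?_⟩
  have := congr($hf (Basis.span hv i))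
  rw [Basis.constr_basis, LinearMap.comp_apply, Submodule.subtype_apply, Basis.span_apply] at this
  rw [InnerProductSpace.toDual_symm_apply]
  exact this

theorem exists_hyperplaneReflection_hyperplaneReflection_eq_add
    (h : LinearIndependent ℝ ![a, b]) (α β : ℝ) :
    ∃ x, hyperplaneReflection a (hyperplaneReflection b x) = x + (α • a + β • b) := by
  obtain ⟨x, hx⟩ := exists_forall_inner_eq_of_linearIndependent h
    ![-(α * ‖a‖ ^ 2 / 2) - β * ⟪b, a⟫, -(β * ‖b‖ ^ 2 / 2)]
  have hxb : ⟪x, b⟫ = -(β * ‖b‖ ^ 2 / 2) := hx 1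
  have hxa : ⟪x + β • b, a⟫ = -(α * ‖a‖ ^ 2 / 2) := by
    rw [inner_add_left, real_inner_smul_left, show ⟪x, a⟫ = _ from hx 0]
    exact sub_add_cancel _ _
  refine ⟨x, ?_⟩
  rw [hyperplaneReflection_eq_add_smul hxb, hyperplaneReflection_eq_add_smul hxa]
  abel

/-- The product of the reflections in the directions `a` and `b` maps some `x` to `x + e`, where
`e = α • a + β • b`. As these have the same norm, the reflection in direction `e` exchanges them. -/
theorem IsSymmDirection.not_isStrictDirection_add (hρτ : ρ < τ) (hτ : 0 < τ)
    (ha : IsSymmDirection ρ τ u a) (hb : IsSymmDirection ρ τ u b) (α β : ℝ) :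
    ¬IsStrictDirection ρ τ u (α • a + β • b) := by
  intro he
  rcases eq_or_ne a 0 with rfl | ha₀
  · rw [smul_zero, zero_add] at he
    exact he.not_isSymmDirection hρτ hτ (hb.smul β)
  by_cases hab : LinearIndependent ℝ ![a, b]
  swap
  · obtain ⟨r, rfl⟩ : ∃ r : ℝ, r • a = b := by
      simpa only [LinearIndependent.pair_iff' ha₀, not_forall, not_not] using hab
    rw [smul_smul, ← add_smul] at he
    exact he.not_isSymmDirection hρτ hτ (ha.smul _)
  obtain ⟨x, hx⟩ := exists_hyperplaneReflection_hyperplaneReflection_eq_add hab α β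
  set e := α • a + β • b
  have hnorm : ‖x + e‖ = ‖x‖ := by
    rw [← hx, LinearIsometryEquiv.norm_map, LinearIsometryEquiv.norm_map]
  have hinner : 0 < ⟪x + e, e⟫ := by
    simpa using inner_sub_self_pos_of_norm_eq hnorm (by simpa using he.1)
  have hexchange : hyperplaneReflection e (x + e) = x := by
    simpa using hyperplaneReflection_sub_of_norm_eq hnorm
  have hne : x + e ≠ 0 := fun h => by simp [h] at hinner
  obtain ⟨k, hk, hk_mem⟩ := exists_pos_smul_mem_openShell hρτ hτ hne
  have hkx : k • x ∈ openShell ρ τ := by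
    rwa [← hexchange, ← map_smul, hyperplaneReflection_mem_openShell]
  have hinvariant : u (k • (x + e)) 0 = u (k • x) 0 := by
    rw [← hx, ← map_smul, ← map_smul, ha _ (hyperplaneReflection_mem_openShell.mpr hkx) 0 le_rfl,
      hb _ hkx 0 le_rfl]
  have hpos := he.2 (k • (x + e)) ⟨hk_mem, by rw [real_inner_smul_left]; positivity⟩ 0 le_rfl
  rw [reflDiff, map_smul, hexchange, hinvariant, sub_self] at hpos
  exact hpos.false

end SymmetricPairs

section ShellSolution

variable {E : Type*} [NormedAddCommGroup E] [InnerProductSpace ℝ E] [FiniteDimensional ℝ E]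
  {ρ τ T L t δ : ℝ} {u : E → ℝ → ℝ} {e v x : E} {K : Set E}

/-- A time-periodic continuous function `u` on a closed shell which vanishes on the boundary and
satisfies the only consequence of the semilinear equation that matters here: each difference
`reflDiff u v` satisfies the linear inequality `∂ₜw - Δw ≥ -L|w|`. The condition `ρ ≠ 0` excludes
the punctured ball. -/
structure IsShellSolution (ρ τ T L : ℝ) (u : E → ℝ → ℝ) : Prop where
  inner_lt_outer : ρ < τ
  outer_pos : 0 < τ
  inner_ne_zero : ρ ≠ 0
  period_pos : 0 < T
  lipschitz_nonneg : 0 ≤ L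
  continuousOn : ContinuousOn (fun p : E × ℝ => u p.1 p.2) (closedShell ρ τ ×ˢ Ici 0)
  periodic : ∀ x ∈ closedShell ρ τ, ∀ t, 0 ≤ t → u x (t + T) = u x t
  eq_zero : ∀ x ∈ closedShell ρ τ, x ∉ openShell ρ τ → ∀ t, 0 ≤ t → u x t = 0
  isSupersolutionAt : ∀ v, ∀ x ∈ openShell ρ τ, ∀ t, 0 < t →
    IsSupersolutionAt L (reflDiff u v) x t

namespace IsShellSolution

theorem isSupersolution (h : IsShellSolution ρ τ T L u) (v : E) :
    IsSupersolution (halfShell ρ τ v) L (reflDiff u v) where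
  continuousOn := by
    have hclosed : ∀ x ∈ closure (halfShell ρ τ v), x ∈ closedShell ρ τ :=
      fun x hx => (closure_halfShell_subset hx).1
    exact (h.continuousOn.mono (prod_mono_left hclosed)).sub
      (h.continuousOn.comp (f := fun p : E × ℝ => (hyperplaneReflection v p.1, p.2)) (by fun_prop)
        fun p hp => ⟨hyperplaneReflection_mem_closedShell.mpr (hclosed _ hp.1), hp.2⟩)
  isSupersolutionAt x hx t ht := h.isSupersolutionAt v x hx.1 t ht

theorem reflDiff_add_period (h : IsShellSolution ρ τ T L u) (hx : x ∈ closedShell ρ τ)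
    (ht : 0 ≤ t) : reflDiff u v x (t + T) = reflDiff u v x t := by
  rw [reflDiff, reflDiff, h.periodic x hx t ht,
    h.periodic _ (hyperplaneReflection_mem_closedShell.mpr hx) t ht]

theorem reflDiff_eq_zero_of_mem_frontier (h : IsShellSolution ρ τ T L u)
    (hx : x ∈ frontier (halfShell ρ τ v)) (ht : 0 ≤ t) : reflDiff u v x t = 0 := by
  rw [isOpen_halfShell.frontier_eq] at hx
  obtain ⟨hx_closed, hxv⟩ := closure_halfShell_subset hx.1
  by_cases hx_open : x ∈ openShell ρ τ
  · exact reflDiff_eq_zero_of_inner_eq_zero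
      (hxv.antisymm' (not_lt.mp fun hpos => hx.2 ⟨hx_open, hpos⟩))
  · rw [reflDiff, h.eq_zero x hx_closed hx_open t ht, h.eq_zero _
      (hyperplaneReflection_mem_closedShell.mpr hx_closed)
      (hyperplaneReflection_mem_openShell.not.mpr hx_open) t ht, sub_zero]

theorem isWeakDirection_of_nonneg_zero (h : IsShellSolution ρ τ T L u)
    (hinit : ∀ x ∈ halfShell ρ τ v, 0 ≤ reflDiff u v x 0) : IsWeakDirection ρ τ u v :=
  fun _ hx _ ht => (h.isSupersolution v).nonneg_of_nonneg_frontier isOpen_halfShell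
    isBounded_halfShell (fun _ hx _ ht => (h.reflDiff_eq_zero_of_mem_frontier hx ht).ge) hinit
    (subset_closure hx) ht

theorem isStrictDirection_of_pos (h : IsShellSolution ρ τ T L u) (hv : IsWeakDirection ρ τ u v)
    (hx : x ∈ halfShell ρ τ v) (ht : 0 ≤ t) (hpos : 0 < reflDiff u v x t) :
    IsStrictDirection ρ τ u v :=
  ⟨ne_zero_of_mem_halfShell hx, fun _ hy _ hs =>
    (h.isSupersolution v).pos_of_periodic h.lipschitz_nonneg isOpen_halfShell
      isPreconnected_halfShell h.period_pos
      (fun _ hx _ ht => h.reflDiff_add_period (openShell_subset_closedShell hx.1) ht)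
      hv hx ht hpos hy hs⟩

theorem isStrictDirection_of_nonneg_zero (h : IsShellSolution ρ τ T L u)
    (hinit : ∀ x ∈ halfShell ρ τ v, 0 ≤ reflDiff u v x 0)
    (hne : ∃ x ∈ halfShell ρ τ v, reflDiff u v x 0 ≠ 0) : IsStrictDirection ρ τ u v := by
  obtain ⟨x, hx, hne⟩ := hne
  exact h.isStrictDirection_of_pos (h.isWeakDirection_of_nonneg_zero hinit) hx le_rfl
    ((hinit x hx).lt_of_ne' hne)

theorem isStrictDirection_or_isSymmDirection (h : IsShellSolution ρ τ T L u)
    (hv : IsWeakDirection ρ τ u v) : IsStrictDirection ρ τ u v ∨ IsSymmDirection ρ τ u v := by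
  by_cases! hpos : ∃ x ∈ halfShell ρ τ v, ∃ t, 0 ≤ t ∧ 0 < reflDiff u v x t
  · obtain ⟨x, hx, t, ht, hpos⟩ := hpos
    exact .inl (h.isStrictDirection_of_pos hv hx ht hpos)
  · exact .inr (isSymmDirection_of_reflDiff_eq_zero fun x hx t ht =>
      (hpos x hx t ht).antisymm (hv x hx t ht))

theorem continuousAt_reflDiff_uncurry (h : IsShellSolution ρ τ T L u) (hv : v ≠ 0)
    (hx : x ∈ openShell ρ τ) (ht : 0 < t) :
    ContinuousAt (fun p : E × E × ℝ => reflDiff u p.1 p.2.1 p.2.2) (v, x, t) := by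
  have hu : ∀ y ∈ openShell ρ τ, ContinuousAt (fun p : E × ℝ => u p.1 p.2) (y, t) := fun y hy =>
    h.continuousOn.continuousAt (prod_mem_nhds
      (mem_of_superset (isOpen_openShell.mem_nhds hy) openShell_subset_closedShell)
      (Ici_mem_nhds ht))
  have hrefl : ContinuousAt (fun p : E × E × ℝ => hyperplaneReflection p.1 p.2.1) (v, x, t) :=
    (continuousAt_hyperplaneReflection_uncurry hv x).comp (x := (v, x, t))
      (f := fun p : E × E × ℝ => (p.1, p.2.1)) (by fun_prop)
  exact ((hu x hx).comp (x := (v, x, t)) (f := fun p : E × E × ℝ => p.2) (by fun_prop)).sub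
    ((hu _ (hyperplaneReflection_mem_openShell.mpr hx)).comp (x := (v, x, t))
      (f := fun p : E × E × ℝ => (hyperplaneReflection p.1 p.2.1, p.2.2))
      (hrefl.prodMk (by fun_prop)))

theorem isWeakDirection_of_tendsto (h : IsShellSolution ρ τ T L u) {ι : Type*} {l : Filter ι}
    [l.NeBot] {g : ι → E} (hg : Tendsto g l (𝓝 v))
    (hweak : ∀ᶠ i in l, IsWeakDirection ρ τ u (g i)) : IsWeakDirection ρ τ u v := by
  intro x hx t ht
  have ht' : 0 < t + T := add_pos_of_nonneg_of_pos ht h.period_pos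
  rw [← h.reflDiff_add_period (openShell_subset_closedShell hx.1) ht]
  have hlim : Tendsto (fun i => reflDiff u (g i) x (t + T)) l (𝓝 (reflDiff u v x (t + T))) :=
    (h.continuousAt_reflDiff_uncurry (ne_zero_of_mem_halfShell hx) hx.1 ht').tendsto.comp
      (hg.prodMk_nhds tendsto_const_nhds)
  refine ge_of_tendsto hlim ?_
  filter_upwards [hweak, ((tendsto_const_nhds (x := x)).inner hg).eventually_const_lt hx.2]
    with i hi hxi
  exact hi x ⟨hx.1, hxi⟩ _ ht'.le

theorem eventually_forall_reflDiff_pos (h : IsShellSolution ρ τ T L u)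
    (he : IsStrictDirection ρ τ u e) (hK : IsCompact K) (hKe : K ⊆ halfShell ρ τ e) :
    ∀ᶠ e' in 𝓝 e, ∀ x ∈ K, ∀ t, 0 ≤ t → 0 < reflDiff u e' x t := by
  have hperiod : ∀ᶠ e' in 𝓝 e, ∀ p ∈ K ×ˢ Icc T (2 * T), 0 < reflDiff u e' p.1 p.2 := by
    refine (hK.prod isCompact_Icc).eventually_forall_of_forall_eventually ?_
    rintro ⟨x, t⟩ ⟨hx, ht⟩
    have ht₀ : 0 < t := h.period_pos.trans_le ht.1
    exact (h.continuousAt_reflDiff_uncurry he.1 (hKe hx).1 ht₀).eventually_const_lt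
      (he.2 x (hKe hx) t ht₀.le)
  filter_upwards [hperiod] with e' he' x hx t ht
  obtain ⟨t', ht', heq⟩ := exists_mem_Icc_apply_eq_of_periodic_on_Ici (f := reflDiff u e' x)
    (fun t ht => h.reflDiff_add_period (openShell_subset_closedShell (hKe hx).1) ht)
    h.period_pos ht
  exact heq ▸ he' (x, t') ⟨hx, ht'⟩

theorem eventually_forall_reflDiff_pos_of_le_depth (h : IsShellSolution ρ τ T L u)
    (he : IsStrictDirection ρ τ u e) (hδ : 0 < δ) :
    ∀ᶠ e' in 𝓝 e, ∀ x ∈ closedShell (ρ + δ) (τ - δ), δ ≤ ⟪x, e'⟫ →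
      ∀ t, 0 ≤ t → 0 < reflDiff u e' x t := by
  have hcore : IsCompact (closedShell (ρ + δ) (τ - δ) ∩ {x | δ / 2 ≤ ⟪x, e⟫}) :=
    isCompact_closedShell.inter_right
      (isClosed_Ici.preimage (f := fun x : E => ⟪x, e⟫) (by fun_prop))
  have hsub : closedShell (ρ + δ) (τ - δ) ∩ {x | δ / 2 ≤ ⟪x, e⟫} ⊆ halfShell ρ τ e :=
    fun x hx => ⟨⟨by linarith [hx.1.1], by linarith [hx.1.2]⟩, (half_pos hδ).trans_le hx.2⟩
  have hnear : ∀ᶠ e' in 𝓝 e, ∀ x ∈ closedShell (ρ + δ) (τ - δ), ⟪x, e'⟫ - ⟪x, e⟫ < δ / 2 := by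
    refine isCompact_closedShell.eventually_forall_of_forall_eventually fun x _ => ?_
    refine (show ContinuousAt (fun p : E × E => ⟪p.2, p.1⟫ - ⟪p.2, e⟫) (e, x) by
      fun_prop).eventually_lt_const ?_
    simpa using hδ
  filter_upwards [h.eventually_forall_reflDiff_pos he hcore hsub, hnear] with e' hpos hnear x hx hxe
  exact hpos x ⟨hx, show δ / 2 ≤ ⟪x, e⟫ by linarith [hnear x hx]⟩

end IsShellSolution

theorem exists_narrow_parameters {ρ τ a : ℝ} (hτ : 0 < τ) (hρ : ρ ≠ 0) (ha : 0 < a) (n L : ℝ) :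
    ∃ γ δ : ℝ, 0 < γ ∧ γ < a ∧ 0 < δ ∧ n * δ ≤ γ ∧ γ + δ ≤ τ ∧ (γ ≤ ρ ∨ ρ + δ ≤ 0) ∧
      (L + 1) * δ ^ 2 ≤ γ := by
  obtain ⟨γ, hγ, hγa, hγτ, hγρ⟩ : ∃ γ : ℝ, 0 < γ ∧ γ < a ∧ γ < τ ∧ (γ ≤ ρ ∨ ρ < 0) := by
    rcases hρ.lt_or_gt with hρ | hρ
    · obtain ⟨γ, hγ, hγ_lt⟩ := exists_between (lt_min ha hτ)
      exact ⟨γ, hγ, (lt_min_iff.mp hγ_lt).1, (lt_min_iff.mp hγ_lt).2, .inr hρ⟩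
    · obtain ⟨γ, hγ, hγ_lt⟩ := exists_between (lt_min (lt_min ha hτ) hρ)
      simp only [lt_min_iff] at hγ_lt
      exact ⟨γ, hγ, hγ_lt.1.1, hγ_lt.1.2, .inl hγ_lt.2.le⟩
  have hsmall : ∀ {g : ℝ → ℝ} {c : ℝ}, Continuous g → g 0 < c → ∀ᶠ δ in 𝓝[>] 0, g δ < c :=
    fun hg hc => (hg.continuousAt.eventually_lt_const hc).filter_mono nhdsWithin_le_nhds
  have hρδ : ∀ᶠ δ in 𝓝[>] 0, γ ≤ ρ ∨ ρ + δ < 0 :=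
    hγρ.elim (fun h => .of_forall fun _ => .inl h) fun h =>
      (hsmall (g := (ρ + ·)) (by fun_prop) (by simpa using h)).mono fun _ => .inr
  obtain ⟨δ, hδ, hnδ, hγδ, hLδ, hρδ⟩ := (eventually_mem_nhdsWithin.and
    ((hsmall (g := (n * ·)) (by fun_prop) (by simpa using hγ)).and
    ((hsmall (g := (γ + ·)) (by fun_prop) (by simpa using hγτ)).and
    ((hsmall (g := fun δ => (L + 1) * δ ^ 2) (by fun_prop) (by simpa using hγ)).and hρδ)))).exists
  exact ⟨γ, δ, hγ, hγa, hδ, hnδ.le, hγδ.le, hρδ.imp_right le_of_lt, hLδ.le⟩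

/-- On a compact core of the half shell, positivity persists by continuity; the remaining region is
narrow, so that the maximum principle holds there. -/
theorem IsShellSolution.eventually_isStrictDirection (h : IsShellSolution ρ τ T L u)
    (he : IsStrictDirection ρ τ u e) : ∀ᶠ e' in 𝓝 e, IsStrictDirection ρ τ u e' := by
  have hnorm : 0 < ‖e‖ ^ 2 := pow_pos (norm_pos_iff.mpr he.1) 2
  obtain ⟨γ, δ, hγ, hγe, hδ, hnδ, hγδ, hγρ, hLδ⟩ :=
    exists_narrow_parameters h.outer_pos h.inner_ne_zero hnorm (finrank ℝ E) L
  obtain ⟨x, hx⟩ := halfShell_nonempty h.inner_lt_outer h.outer_pos he.1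
  filter_upwards [h.eventually_forall_reflDiff_pos_of_le_depth he hδ,
    h.eventually_forall_reflDiff_pos he isCompact_singleton (singleton_subset_iff.mpr hx),
    (show ContinuousAt (fun e' : E => ‖e'‖ ^ 2) e by fun_prop).eventually_const_lt hγe,
    (show ContinuousAt (fun e' : E => ⟪x, e'⟫) e by fun_prop).eventually_const_lt hx.2]
    with e' hcore hpos hnorm hxe'
  have hweak : IsWeakDirection ρ τ u e' := fun y hy t ht =>
    (h.isSupersolution e').nonneg_of_nonneg_of_le_depth h.lipschitz_nonneg h.period_pos
      (fun z hz s hs => h.reflDiff_add_period (closure_halfShell_subset hz).1 hs)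
      (fun z hz s hs => (h.reflDiff_eq_zero_of_mem_frontier hz hs).ge)
      hδ hγ hnorm.le hnδ hγδ hγρ hLδ
      (fun z hze' hzρ hzτ s hs =>
        (hcore z ⟨by linarith, by linarith⟩ hze' s hs).le) hy ht
  exact h.isStrictDirection_of_pos hweak ⟨hx.1, hxe'⟩ le_rfl (hpos x rfl 0 le_rfl)

end ShellSolution

section Axis

variable {E : Type*} [NormedAddCommGroup E] [InnerProductSpace ℝ E] [FiniteDimensional ℝ E]
  {ρ τ T L c s t : ℝ} {u : E → ℝ → ℝ} {e p v x y : E}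

theorem exists_unit_normal {V : Submodule ℝ E} (he : e ∉ V) :
    ∃ p ∈ Vᗮ, ‖p‖ = 1 ∧ 0 < ⟪e, p⟫ := by
  set q := e - V.starProjection e
  have hq : q ∈ Vᗮ := V.sub_starProjection_mem_orthogonal e
  have hnorm : 0 < ‖q‖ := norm_pos_iff.mpr fun h =>
    he (sub_eq_zero.mp h ▸ V.starProjection_apply_mem e)
  have hinner : ⟪e, q⟫ = ‖q‖ ^ 2 := by
    rw [← real_inner_self_eq_norm_sq, inner_sub_left, hq _ (V.starProjection_apply_mem e), sub_zero]
  refine ⟨‖q‖⁻¹ • q, Vᗮ.smul_mem _ hq, ?_, ?_⟩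
  · rw [norm_smul, norm_inv, norm_norm, inv_mul_cancel₀ hnorm.ne']
  · rw [real_inner_smul_right, hinner]
    positivity

namespace IsShellSolution

theorem isStrictDirection_add_smul_of_forall_not_isSymmDirection (h : IsShellSolution ρ τ T L u)
    (he : IsStrictDirection ρ τ u e) (hsymm : ∀ s : ℝ, 0 ≤ s → ¬IsSymmDirection ρ τ u (e + s • v))
    (hs : 0 ≤ s) : IsStrictDirection ρ τ u (e + s • v) := by
  have hray : Continuous fun r : ℝ => e + r • v := by fun_prop
  suffices Icc 0 s ⊆ {r : ℝ | IsStrictDirection ρ τ u (e + r • v)} from this ⟨hs, le_rfl⟩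
  refine IsClosed.Icc_subset_of_forall_mem_nhdsWithin ?_ (by simpa using he) fun r hr =>
    mem_nhdsWithin_of_mem_nhds (hray.continuousAt.eventually (h.eventually_isStrictDirection hr.1))
  refine IsSeqClosed.isClosed fun r r₀ hr hlim => ?_
  have hr₀ : r₀ ∈ Icc 0 s := isClosed_Icc.mem_of_tendsto hlim (.of_forall fun n => (hr n).2)
  have hweak : IsWeakDirection ρ τ u (e + r₀ • v) :=
    h.isWeakDirection_of_tendsto ((hray.tendsto r₀).comp hlim)
      (.of_forall fun n => (hr n).1.isWeakDirection)
  exact ⟨(h.isStrictDirection_or_isSymmDirection hweak).resolve_right (hsymm r₀ hr₀.1), hr₀⟩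

theorem isWeakDirection_of_forall_isStrictDirection (h : IsShellSolution ρ τ T L u)
    (hstrict : ∀ s : ℝ, 0 ≤ s → IsStrictDirection ρ τ u (e + s • v)) :
    IsWeakDirection ρ τ u v := by
  have hlim : Tendsto (fun s : ℝ => s⁻¹ • e + v) atTop (𝓝 v) := by
    simpa using (tendsto_inv_atTop_zero (𝕜 := ℝ)).smul_const e |>.add_const v
  refine h.isWeakDirection_of_tendsto hlim ?_
  filter_upwards [eventually_gt_atTop 0] with s hs
  simpa only [smul_add, inv_smul_smul₀ hs.ne'] using
    (hstrict s hs.le).isWeakDirection.smul (inv_pos.mpr hs)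

theorem exists_isSymmDirection_add_smul (h : IsShellSolution ρ τ T L u)
    (he : IsStrictDirection ρ τ u e) (hv : ¬IsWeakDirection ρ τ u v) :
    ∃ s : ℝ, 0 < s ∧ IsSymmDirection ρ τ u (e + s • v) := by
  by_contra! hsymm
  refine hv (h.isWeakDirection_of_forall_isStrictDirection fun s =>
    h.isStrictDirection_add_smul_of_forall_not_isSymmDirection he fun s hs => ?_)
  rcases hs.eq_or_lt with rfl | hs
  · simpa using he.not_isSymmDirection h.inner_lt_outer h.outer_pos
  · exact hsymm s hs

theorem isWeakDirection_or_isWeakDirection_neg (h : IsShellSolution ρ τ T L u)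
    (he : IsStrictDirection ρ τ u e) (v : E) :
    IsWeakDirection ρ τ u v ∨ IsWeakDirection ρ τ u (-v) := by
  by_contra! hv
  obtain ⟨s, hs, hsymm_s⟩ := h.exists_isSymmDirection_add_smul he hv.1
  obtain ⟨r, hr, hsymm_r⟩ := h.exists_isSymmDirection_add_smul he hv.2
  refine hsymm_s.not_isStrictDirection_add h.inner_lt_outer h.outer_pos hsymm_r (r / (s + r))
    (s / (s + r)) ?_
  convert he using 1
  match_scalars <;> field_simp <;> ring

theorem isSymmDirection_add (h : IsShellSolution ρ τ T L u) (he : IsStrictDirection ρ τ u e)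
    (hx : IsSymmDirection ρ τ u x) (hy : IsSymmDirection ρ τ u y) :
    IsSymmDirection ρ τ u (x + y) := by
  have hspan := hx.not_isStrictDirection_add h.inner_lt_outer h.outer_pos hy
  rcases h.isWeakDirection_or_isWeakDirection_neg he (x + y) with hw | hw
  · exact (h.isStrictDirection_or_isSymmDirection hw).resolve_left (by simpa using hspan 1 1)
  · exact isSymmDirection_neg.mp ((h.isStrictDirection_or_isSymmDirection hw).resolve_left (by
      simpa [add_comm] using hspan (-1) (-1)))

/-- The subspace of directions of symmetry. -/
def symmSubmodule (h : IsShellSolution ρ τ T L u) (he : IsStrictDirection ρ τ u e) :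
    Submodule ℝ E where
  carrier := {v | IsSymmDirection ρ τ u v}
  zero_mem' := isSymmDirection_zero
  smul_mem' c _ hv := hv.smul c
  add_mem' hx hy := h.isSymmDirection_add he hx hy

theorem exists_isSymmDirection_sub_smul (h : IsShellSolution ρ τ T L u)
    (he : IsStrictDirection ρ τ u e) (x : E) : ∃ c : ℝ, IsSymmDirection ρ τ u (x - c • e) := by
  by_cases hx : IsWeakDirection ρ τ u x
  · by_cases hx' : IsWeakDirection ρ τ u (-x)
    · exact ⟨0, by simpa using hx.isSymmDirection hx'⟩
    · obtain ⟨s, hs, hsymm⟩ := h.exists_isSymmDirection_add_smul he hx'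
      refine ⟨s⁻¹, ?_⟩
      convert hsymm.smul (-s⁻¹) using 1
      match_scalars <;> field_simp
  · obtain ⟨s, hs, hsymm⟩ := h.exists_isSymmDirection_add_smul he hx
    refine ⟨-s⁻¹, ?_⟩
    convert hsymm.smul s⁻¹ using 1
    match_scalars <;> field_simp

theorem isWeakDirection_smul_add (h : IsShellSolution ρ τ T L u)
    (he : IsStrictDirection ρ τ u e) (hv : IsSymmDirection ρ τ u v) (hc : 0 ≤ c) :
    IsWeakDirection ρ τ u (c • e + v) := by
  rcases hc.eq_or_lt with rfl | hc
  · simpa using hv.isWeakDirection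
  have hsymm : ∀ s : ℝ, 0 ≤ s → ¬IsSymmDirection ρ τ u (e + s • v) := fun s _ hs =>
    hs.not_isStrictDirection_add h.inner_lt_outer h.outer_pos hv 1 (-s) (by simpa using he)
  have hstrict := h.isStrictDirection_add_smul_of_forall_not_isSymmDirection he hsymm
    (inv_nonneg.mpr hc.le)
  simpa only [smul_add, smul_inv_smul₀ hc.ne'] using hstrict.isWeakDirection.smul hc

/-- The axis is the unit normal to the hyperplane of directions of symmetry, on the side of `e`. -/
theorem exists_forall_isWeakDirection (h : IsShellSolution ρ τ T L u)
    (he : IsStrictDirection ρ τ u e) :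
    ∃ p : E, ‖p‖ = 1 ∧ ∀ x, 0 ≤ ⟪x, p⟫ → IsWeakDirection ρ τ u x := by
  obtain ⟨p, hp, hp_norm, hep⟩ := exists_unit_normal (V := h.symmSubmodule he)
    (he.not_isSymmDirection h.inner_lt_outer h.outer_pos)
  refine ⟨p, hp_norm, fun x hx => ?_⟩
  obtain ⟨c, hc⟩ := h.exists_isSymmDirection_sub_smul he x
  have horth : ⟪x - c • e, p⟫ = 0 := hp _ hc
  rw [inner_sub_left, real_inner_smul_left, sub_eq_zero] at horth
  have hc_nonneg : 0 ≤ c := nonneg_of_mul_nonneg_left (horth ▸ hx) hep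
  simpa using h.isWeakDirection_smul_add he hc hc_nonneg

theorem le_of_forall_isWeakDirection (h : IsShellSolution ρ τ T L u)
    (hp : ∀ x, 0 ≤ ⟪x, p⟫ → IsWeakDirection ρ τ u x) (hx : x ∈ closedShell ρ τ)
    (hxy : ‖x‖ = ‖y‖) (hle : ⟪y, p⟫ ≤ ⟪x, p⟫) (ht : 0 ≤ t) : u y t ≤ u x t := by
  rcases eq_or_ne x y with rfl | hne
  · exact le_rfl
  by_cases hx_open : x ∈ openShell ρ τ
  · have hweak := hp (x - y) (by rwa [inner_sub_left, sub_nonneg]) x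
      ⟨hx_open, inner_sub_self_pos_of_norm_eq hxy hne⟩ t ht
    rwa [reflDiff, hyperplaneReflection_sub_of_norm_eq hxy, sub_nonneg] at hweak
  · have hy : y ∈ closedShell ρ τ := by simpa only [closedShell, mem_ofPred_eq, hxy] using hx
    have hy_open : y ∉ openShell ρ τ := by simpa only [openShell, mem_ofPred_eq, hxy] using hx_open
    rw [h.eq_zero x hx hx_open t ht, h.eq_zero y hy hy_open t ht]

end IsShellSolution

end Axis

section SemilinearEquation

variable {E : Type*} [NormedAddCommGroup E] [InnerProductSpace ℝ E] [FiniteDimensional ℝ E]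
  {ρ τ T L t : ℝ} {f : ℝ → ℝ → ℝ → ℝ} {u : E → ℝ → ℝ} {v x : E}

/-- The semilinear heat equation `∂ₜu = Δu + f(t, |x|, u)` at the point `(x, t)`, for a function
which is differentiable in time and `C²` in space there. -/
structure IsClassicalSolutionAt (f : ℝ → ℝ → ℝ → ℝ) (u : E → ℝ → ℝ) (x : E) (t : ℝ) : Prop where
  differentiableAt : DifferentiableAt ℝ (u x) t
  contDiffAt : ContDiffAt ℝ 2 (fun y => u y t) x
  deriv_eq : deriv (u x) t = Δ (fun y => u y t) x + f t ‖x‖ (u x t)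

theorem IsClassicalSolutionAt.isSupersolutionAt_reflDiff (hx : IsClassicalSolutionAt f u x t)
    (hy : IsClassicalSolutionAt f u (hyperplaneReflection v x) t)
    (hlip : |f t ‖x‖ (u x t) - f t ‖x‖ (u (hyperplaneReflection v x) t)| ≤
      L * |u x t - u (hyperplaneReflection v x) t|) :
    IsSupersolutionAt L (reflDiff u v) x t := by
  have hcomp : ContDiffAt ℝ 2 (fun y => u (hyperplaneReflection v y) t) x :=
    hy.contDiffAt.comp x (hyperplaneReflection v).contDiff.contDiffAt
  refine ⟨hx.differentiableAt.sub hy.differentiableAt, hx.contDiffAt.sub hcomp, ?_⟩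
  have htime : deriv (reflDiff u v x) t = deriv (u x) t - deriv (u (hyperplaneReflection v x)) t :=
    deriv_sub hx.differentiableAt hy.differentiableAt
  have hspace : Δ (fun y => reflDiff u v y t) x =
      Δ (fun y => u y t) x - Δ (fun y => u y t) (hyperplaneReflection v x) := by
    rw [← laplacian_comp_linearIsometryEquiv (hyperplaneReflection v) (fun y => u y t) x]
    exact hx.contDiffAt.laplacian_sub hcomp
  rw [htime, hspace, hx.deriv_eq, hy.deriv_eq, LinearIsometryEquiv.norm_map]
  have := (abs_le.mp hlip).1
  simp only [reflDiff]
  linarith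

/-- The solution takes values in a compact interval, on which the nonlinearity is Lipschitz. -/
theorem exists_isShellSolution (hρτ : ρ < τ) (hτ : 0 < τ) (hρ : ρ ≠ 0) (hT : 0 < T)
    (hlip : ∀ C > 0, ∃ L > 0, ∀ t, 0 ≤ t → ∀ x ∈ (openShell ρ τ : Set E),
      ∀ a ∈ Icc (-C) C, ∀ b ∈ Icc (-C) C, |f t ‖x‖ a - f t ‖x‖ b| ≤ L * |a - b|)
    (hu : ContinuousOn (fun p : E × ℝ => u p.1 p.2) (closure (openShell ρ τ) ×ˢ Ici 0))
    (hper : ∀ x ∈ (openShell ρ τ : Set E), ∀ t, 0 ≤ t → u x (t + T) = u x t)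
    (hzero : ∀ x ∈ frontier (openShell ρ τ), ∀ t, 0 < t → u x t = 0)
    (hsol : ∀ x ∈ openShell ρ τ, ∀ t, 0 < t → IsClassicalSolutionAt f u x t) :
    ∃ L, IsShellSolution ρ τ T L u := by
  have hper' : ∀ x ∈ closedShell ρ τ, ∀ t, 0 ≤ t → u x (t + T) = u x t := fun x hx t ht =>
    add_period_of_mem_closure hu hT.le hper ((closure_openShell (E := E) hρτ hτ hρ).ge hx) ht
  rw [closure_openShell hρτ hτ hρ] at hu
  rw [isOpen_openShell.frontier_eq, closure_openShell hρτ hτ hρ] at hzero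
  obtain ⟨C, hC, hbound⟩ := exists_forall_mem_Icc_of_periodic isCompact_closedShell hu hT hper'
  obtain ⟨L, hL, hlip⟩ := hlip C hC
  refine ⟨L, hρτ, hτ, hρ, hT, hL.le, hu, hper', fun x hx hx' t ht => ?_, fun v x hx t ht => ?_⟩
  · exact hper' x hx t ht ▸ hzero x ⟨hx, hx'⟩ _ (by positivity)
  · have hvx := hyperplaneReflection_mem_openShell (v := v).mpr hx
    exact (hsol x hx t ht).isSupersolutionAt_reflDiff (hsol _ hvx t ht) (hlip t ht.le x hx
      _ (hbound _ (openShell_subset_closedShell hx) t ht.le)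
      _ (hbound _ (openShell_subset_closedShell hvx) t ht.le))

end SemilinearEquation

section RadialDomain

theorem contDiffAt_two_of_hasFDerivAt {E F : Type*} [NormedAddCommGroup E] [NormedSpace ℝ E]
    [NormedAddCommGroup F] [NormedSpace ℝ F] {g : E → F} {g' : E → E →L[ℝ] F}
    {g'' : E → E →L[ℝ] E →L[ℝ] F} {s : Set E} {x : E} (hs : s ∈ 𝓝 x)
    (hg : ∀ y ∈ s, HasFDerivAt g (g' y) y) (hg' : ∀ y ∈ s, HasFDerivAt g' (g'' y) y)
    (hg'' : ContinuousOn g'' s) : ContDiffAt ℝ 2 g x := by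
  have hg'₁ : ContDiffAt ℝ 1 g' x :=
    (contDiffAt_succ_iff_hasFDerivAt (n := 0)).mpr
      ⟨g'', ⟨s, hs, hg'⟩, contDiffAt_zero.mpr ⟨s, hs, hg''⟩⟩
  exact (contDiffAt_succ_iff_hasFDerivAt (n := 1)).mpr ⟨g', ⟨s, hs, hg⟩, hg'₁⟩

variable {f : ℝ → ℝ → ℝ → ℝ} {u : EuclideanSpace ℝ (Fin N) → ℝ → ℝ}
  {B : Set (EuclideanSpace ℝ (Fin N))} {e x : EuclideanSpace ℝ (Fin N)} {t a : ℝ}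

theorem isClassicalSolutionAt_of_hasFDerivAt
    {Du : EuclideanSpace ℝ (Fin N) → EuclideanSpace ℝ (Fin N) →L[ℝ] ℝ}
    {D2u : EuclideanSpace ℝ (Fin N) →
      EuclideanSpace ℝ (Fin N) →L[ℝ] EuclideanSpace ℝ (Fin N) →L[ℝ] ℝ}
    (hB : B ∈ 𝓝 x) (hut : HasDerivAt (u x) a t)
    (hDu : ∀ y ∈ B, HasFDerivAt (fun y => u y t) (Du y) y)
    (hD2u : ∀ y ∈ B, HasFDerivAt Du (D2u y) y) (hcont : ContinuousOn D2u B)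
    (heq : a = (∑ i, D2u x (EuclideanSpace.single i 1) (EuclideanSpace.single i 1)) +
      f t ‖x‖ (u x t)) :
    IsClassicalSolutionAt f u x t := by
  refine ⟨hut.differentiableAt, contDiffAt_two_of_hasFDerivAt hB hDu hD2u hcont, ?_⟩
  have hfderiv : fderiv ℝ (fun y => u y t) =ᶠ[𝓝 x] Du := by
    filter_upwards [hB] with y hy using (hDu y hy).fderiv
  rw [hut.deriv, heq, laplacian_eq_sum_fderiv_fderiv (EuclideanSpace.basisFun (Fin N) ℝ),
    hfderiv.fderiv_eq, (hD2u x (mem_of_mem_nhds hB)).fderiv]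
  simp only [EuclideanSpace.basisFun_apply]

theorem IsRadialDomain.exists_eq_openShell (hB : IsRadialDomain B) :
    ∃ ρ τ, ρ < τ ∧ 0 < τ ∧ ρ ≠ 0 ∧ B = openShell ρ τ := by
  rcases hB with ⟨R, hR, rfl⟩ | ⟨r, R, hr, hrR, rfl⟩
  · refine ⟨-1, R ^ 2, neg_one_lt_zero.trans (by positivity), by positivity, by norm_num, ?_⟩
    ext x
    rw [mem_ball_zero_iff, openShell, mem_ofPred_eq, mem_Ioo, pow_lt_pow_iff_left₀ (norm_nonneg x)
      hR.le two_ne_zero, and_iff_right (neg_one_lt_zero.trans_le (by positivity))]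
  · have hR : 0 < R := hr.trans hrR
    refine ⟨r ^ 2, R ^ 2, pow_lt_pow_left₀ hrR hr.le two_ne_zero, by positivity, by positivity, ?_⟩
    ext x
    rw [openShell, mem_ofPred_eq, mem_ofPred_eq, mem_Ioo, pow_lt_pow_iff_left₀ hr.le (norm_nonneg x)
      two_ne_zero, pow_lt_pow_iff_left₀ (norm_nonneg x) hR.le two_ne_zero]

theorem hyperplaneReflection_eq_reflHyp (he : ‖e‖ = 1) (x : EuclideanSpace ℝ (Fin N)) :
    hyperplaneReflection e x = reflHyp e x := by
  rw [hyperplaneReflection_apply, he, one_pow, div_one, reflHyp]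

end RadialDomain

theorem foliated_schwarz_symmetry_time_periodic_general
    {B : Set (EuclideanSpace ℝ (Fin N))} (hB : IsRadialDomain B)
    {f : ℝ → ℝ → ℝ → ℝ}
    {Iset : Set ℝ} (hI : Iset = closure ((fun x : EuclideanSpace ℝ (Fin N) => ‖x‖) '' B))
    (hf_lip : ∀ K > (0:ℝ), ∃ L > (0:ℝ), ∀ t ∈ Ici (0:ℝ), ∀ r ∈ Iset,
      ∀ u₁ ∈ Icc (-K) K, ∀ u₂ ∈ Icc (-K) K, |f t r u₁ - f t r u₂| ≤ L * |u₁ - u₂|)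
    {T : ℝ} (hT : 0 < T)
    {u : EuclideanSpace ℝ (Fin N) → ℝ → ℝ}
    {u₀ : EuclideanSpace ℝ (Fin N) → ℝ}
    {ut : EuclideanSpace ℝ (Fin N) → ℝ → ℝ}
    {Du : EuclideanSpace ℝ (Fin N) → ℝ → (EuclideanSpace ℝ (Fin N) →L[ℝ] ℝ)}
    {D2u : EuclideanSpace ℝ (Fin N) → ℝ →
      (EuclideanSpace ℝ (Fin N) →L[ℝ] EuclideanSpace ℝ (Fin N) →L[ℝ] ℝ)}
    (hu_cont : ContinuousOn (fun p : EuclideanSpace ℝ (Fin N) × ℝ => u p.1 p.2)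
      (closure B ×ˢ Ici 0))
    (hut : ∀ x ∈ B, ∀ t ∈ Ioi (0:ℝ), HasDerivAt (fun s => u x s) (ut x t) t)
    (hDu : ∀ x ∈ B, ∀ t ∈ Ioi (0:ℝ), HasFDerivAt (fun y => u y t) (Du x t) x)
    (hD2u : ∀ x ∈ B, ∀ t ∈ Ioi (0:ℝ), HasFDerivAt (fun y => Du y t) (D2u x t) x)
    (hreg : ContinuousOn (fun p : EuclideanSpace ℝ (Fin N) × ℝ =>
      (ut p.1 p.2, Du p.1 p.2, D2u p.1 p.2)) (B ×ˢ Ioi 0))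
    (hPDE : ∀ x ∈ B, ∀ t ∈ Ioi (0:ℝ),
      ut x t = (∑ i, D2u x t (EuclideanSpace.single i 1) (EuclideanSpace.single i 1))
        + f t ‖x‖ (u x t))
    (hbc : ∀ x ∈ frontier B, ∀ t ∈ Ioi (0:ℝ), u x t = 0)
    (hinit : ∀ x ∈ closure B, u x 0 = u₀ x)
    (hu_per : ∀ x ∈ B, ∀ t ∈ Ici (0:ℝ), u x (t + T) = u x t)
    (hU1 : ∃ e : EuclideanSpace ℝ (Fin N), ‖e‖ = 1 ∧
      (∀ x ∈ halfDom B e, u₀ (reflHyp e x) ≤ u₀ x) ∧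
      (∃ x ∈ halfDom B e, u₀ (reflHyp e x) ≠ u₀ x)) :
    ∃ p : EuclideanSpace ℝ (Fin N), ‖p‖ = 1 ∧
      ∀ t ∈ Ici (0:ℝ), FoliatedSchwarzOn (closure B) (fun x => u x t) p := by
  obtain ⟨ρ, τ, hρτ, hτ, hρ, rfl⟩ := hB.exists_eq_openShell
  obtain ⟨L, hu⟩ : ∃ L, IsShellSolution ρ τ T L u := by
    refine exists_isShellSolution hρτ hτ hρ hT (fun K hK => ?_) hu_cont hu_per hbc
      fun x hx t ht => isClassicalSolutionAt_of_hasFDerivAt (isOpen_openShell.mem_nhds hx)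
        (hut x hx t ht) (fun y hy => hDu y hy t ht) (fun y hy => hD2u y hy t ht)
        (hreg.snd.snd.comp (f := fun y => (y, t)) (by fun_prop) fun y hy => ⟨hy, ht⟩)
        (hPDE x hx t ht)
    obtain ⟨L, hL, hlip⟩ := hf_lip K hK
    exact ⟨L, hL, fun t ht x hx => hlip t ht _ (hI ▸ subset_closure ⟨x, hx, rfl⟩)⟩
  obtain ⟨e, he, hle, x, hx, hne⟩ := hU1
  have hinit_reflDiff : ∀ y ∈ halfDom (openShell ρ τ) e,
      reflDiff u e y 0 = u₀ y - u₀ (reflHyp e y) := fun y hy => by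
    rw [reflDiff, hinit y (subset_closure hy.1), ← hyperplaneReflection_eq_reflHyp he,
      hinit _ (subset_closure (hyperplaneReflection_mem_openShell.mpr hy.1))]
  have hstrict : IsStrictDirection ρ τ u e := hu.isStrictDirection_of_nonneg_zero
    (fun y hy => hinit_reflDiff y hy ▸ sub_nonneg.mpr (hle y hy))
    ⟨x, hx, hinit_reflDiff x hx ▸ sub_ne_zero.mpr hne.symm⟩
  obtain ⟨p, hp, hweak⟩ := hu.exists_forall_isWeakDirection hstrict
  exact ⟨p, hp, fun t ht x hx y _ hxy hyp => hu.le_of_forall_isWeakDirection hweak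
    ((closure_openShell hρτ hτ hρ).le hx) hxy hyp ht⟩

/-- Corollary `maincoro-simple`(ii) of the paper:
if `f` is `T`-periodic in time and `u` is a `T`-periodic classical solution of
`u_t = Δu + f(t,|x|,u)` in `B × (0,∞)`, `u = 0` on `∂B × (0,∞)`, whose initial
profile `u₀ = u(·,0)` satisfies the reflection hypothesis (U1), then there is a
unit vector `p` such that `u(·,t)` is foliated Schwarz symmetric with respect
to `p` for every `t ≥ 0`. -/
theorem foliated_schwarz_symmetry_time_periodic
    (N : ℕ) (hN : 2 ≤ N)
    (B : Set (EuclideanSpace ℝ (Fin N))) (hB : IsRadialDomain B)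
    (f : ℝ → ℝ → ℝ → ℝ)
    (Iset : Set ℝ) (hI : Iset = closure ((fun x : EuclideanSpace ℝ (Fin N) => ‖x‖) '' B))
    -- (f1): continuity in (t,r) and local Lipschitz continuity in u, uniform in (t,r)
    (hf_cont : ∀ s : ℝ, ContinuousOn (fun p : ℝ × ℝ => f p.1 p.2 s) (Ici 0 ×ˢ Iset))
    (hf_lip : ∀ K > (0:ℝ), ∃ L > (0:ℝ), ∀ t ∈ Ici (0:ℝ), ∀ r ∈ Iset,
      ∀ u₁ ∈ Icc (-K) K, ∀ u₂ ∈ Icc (-K) K, |f t r u₁ - f t r u₂| ≤ L * |u₁ - u₂|)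
    -- time periodicity of f
    (T : ℝ) (hT : 0 < T)
    (hf_per : ∀ t ∈ Ici (0:ℝ), ∀ r s : ℝ, f (t + T) r s = f t r s)
    -- the solution and its derivatives
    (u : EuclideanSpace ℝ (Fin N) → ℝ → ℝ)
    (u₀ : EuclideanSpace ℝ (Fin N) → ℝ)
    (ut : EuclideanSpace ℝ (Fin N) → ℝ → ℝ)
    (Du : EuclideanSpace ℝ (Fin N) → ℝ → (EuclideanSpace ℝ (Fin N) →L[ℝ] ℝ))
    (D2u : EuclideanSpace ℝ (Fin N) → ℝ →
      (EuclideanSpace ℝ (Fin N) →L[ℝ] EuclideanSpace ℝ (Fin N) →L[ℝ] ℝ))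
    -- u ∈ C(B̄ × [0,∞))
    (hu_cont : ContinuousOn (fun p : EuclideanSpace ℝ (Fin N) × ℝ => u p.1 p.2)
      (closure B ×ˢ Ici 0))
    -- u ∈ C^{2,1}(B × (0,∞)): the derivatives exist and are continuous there
    (hut : ∀ x ∈ B, ∀ t ∈ Ioi (0:ℝ), HasDerivAt (fun s => u x s) (ut x t) t)
    (hDu : ∀ x ∈ B, ∀ t ∈ Ioi (0:ℝ), HasFDerivAt (fun y => u y t) (Du x t) x)
    (hD2u : ∀ x ∈ B, ∀ t ∈ Ioi (0:ℝ), HasFDerivAt (fun y => Du y t) (D2u x t) x)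
    (hreg : ContinuousOn (fun p : EuclideanSpace ℝ (Fin N) × ℝ =>
      (ut p.1 p.2, Du p.1 p.2, D2u p.1 p.2)) (B ×ˢ Ioi 0))
    -- the equation u_t = Δu + f(t,|x|,u) in B × (0,∞)
    (hPDE : ∀ x ∈ B, ∀ t ∈ Ioi (0:ℝ),
      ut x t = (∑ i, D2u x t (EuclideanSpace.single i 1) (EuclideanSpace.single i 1))
        + f t ‖x‖ (u x t))
    -- the boundary condition u = 0 on ∂B × (0,∞)
    (hbc : ∀ x ∈ frontier B, ∀ t ∈ Ioi (0:ℝ), u x t = 0)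
    -- the initial profile u₀ = u(·,0)
    (hinit : ∀ x ∈ closure B, u x 0 = u₀ x)
    -- time periodicity of the solution
    (hu_per : ∀ x ∈ B, ∀ t ∈ Ici (0:ℝ), u x (t + T) = u x t)
    -- (U1): reflection inequality for the initial profile
    (hU1 : ∃ e : EuclideanSpace ℝ (Fin N), ‖e‖ = 1 ∧
      (∀ x ∈ halfDom B e, u₀ (reflHyp e x) ≤ u₀ x) ∧
      (∃ x ∈ halfDom B e, u₀ (reflHyp e x) ≠ u₀ x)) :
    ∃ p : EuclideanSpace ℝ (Fin N), ‖p‖ = 1 ∧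
      ∀ t ∈ Ici (0:ℝ), FoliatedSchwarzOn (closure B) (fun x => u x t) p :=
  foliated_schwarz_symmetry_time_periodic_general hB hI hf_lip hT hu_cont hut hDu hD2u hreg hPDE
    hbc hinit hu_per hU1

end
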